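/- arXiv:math/0503257 — 2 statements merged into one kernel-verified Lean document; each statement's English description precedes it below -/
import Mathlib

section
/- Let f be an r×m matrix (r ≤ m) of holomorphic functions on an open set in ℂⁿ and let Z be the set of points where f is not surjective (equivalently, where all r×r minors vanish). Then if Z is a proper analytic subset, its codimension is at most m−r+1. -/
namespace DegAux
open Filter Complex Metric Set Topology
open scoped ENNReal

/-- continuous, and holomorphic along every complex line -/
def Hol {E : Type*} [NormedAddCommGroup E] [NormedSpace ℂ E] (Ω : Set E) (φ : E → ℂ) : Prop :=
  ContinuousOn φ Ω ∧ ∀ x ∈ Ω, ∀ v : E, DifferentiableAt ℂ (fun t : ℂ => φ (x + t • v)) 0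

namespace Hol
variable {E : Type*} [NormedAddCommGroup E] [NormedSpace ℂ E] {Ω : Set E} {φ ψ : E → ℂ}
  {E' : Type*} [NormedAddCommGroup E'] [NormedSpace ℂ E']

lemma mono {Ω' : Set E} (h : Hol Ω φ) (hs : Ω' ⊆ Ω) : Hol Ω' φ :=
  ⟨h.1.mono hs, fun x hx => h.2 x (hs hx)⟩

lemma const (c : ℂ) : Hol Ω (fun _ => c) :=
  ⟨continuousOn_const, fun _ _ _ => differentiableAt_const _⟩

lemma add (h : Hol Ω φ) (h' : Hol Ω ψ) : Hol Ω (fun x => φ x + ψ x) :=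
  ⟨h.1.add h'.1, fun x hx v => (h.2 x hx v).add (h'.2 x hx v)⟩

lemma mul (h : Hol Ω φ) (h' : Hol Ω ψ) : Hol Ω (fun x => φ x * ψ x) :=
  ⟨h.1.mul h'.1, fun x hx v => (h.2 x hx v).mul (h'.2 x hx v)⟩

lemma div (h : Hol Ω φ) (h' : Hol Ω ψ) (h0 : ∀ x ∈ Ω, ψ x ≠ 0) : Hol Ω (fun x => φ x / ψ x) :=
  ⟨h.1.div h'.1 h0, fun x hx v => (h.2 x hx v).div (h'.2 x hx v) (by simpa using h0 x hx)⟩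

lemma pow (h : Hol Ω φ) (k : ℕ) : Hol Ω (fun x => φ x ^ k) :=
  ⟨h.1.pow k, fun x hx v => (h.2 x hx v).pow k⟩

lemma sum {ι : Type*} (s : Finset ι) {φ : ι → E → ℂ} (h : ∀ i ∈ s, Hol Ω (φ i)) :
    Hol Ω (fun x => ∑ i ∈ s, φ i x) := by
  classical
  induction s using Finset.induction_on with
  | empty => simpa using const 0
  | insert a s ha ih =>
    simp only [Finset.sum_insert ha]
    exact (h a (by simp)).add (ih fun i hi => h i (by simp [hi]))

lemma prod {ι : Type*} (s : Finset ι) {φ : ι → E → ℂ} (h : ∀ i ∈ s, Hol Ω (φ i)) :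
    Hol Ω (fun x => ∏ i ∈ s, φ i x) := by
  classical
  induction s using Finset.induction_on with
  | empty => simpa using const 1
  | insert a s ha ih =>
    simp only [Finset.prod_insert ha]
    exact (h a (by simp)).mul (ih fun i hi => h i (by simp [hi]))

lemma congr (h : Hol Ω φ) (hΩ : IsOpen Ω) (he : ∀ x ∈ Ω, ψ x = φ x) : Hol Ω ψ := by
  refine ⟨h.1.congr he, fun x hx v => (h.2 x hx v).congr_of_eventuallyEq ?_⟩
  have hc : Continuous fun t : ℂ => x + t • v := by fun_prop
  have := hc.continuousAt.preimage_mem_nhds (x := (0 : ℂ)) (t := Ω) (by simpa using hΩ.mem_nhds hx)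
  filter_upwards [this] with t ht using he _ ht

lemma comp (h : Hol Ω φ) (L : E' →L[ℂ] E) : Hol (L ⁻¹' Ω) (fun x => φ (L x)) := by
  refine ⟨h.1.comp L.continuous.continuousOn (fun x hx => hx), fun x hx v => ?_⟩
  simpa using h.2 (L x) hx (L v)

lemma of_differentiableOn (hΩ : IsOpen Ω) (h : DifferentiableOn ℂ φ Ω) : Hol Ω φ := by
  refine ⟨h.continuousOn, fun x hx v => ?_⟩
  have h1 : DifferentiableAt ℂ φ (x + (0 : ℂ) • v) := by
    simpa using h.differentiableAt (hΩ.mem_nhds hx)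
  exact DifferentiableAt.comp (0 : ℂ) (g := φ) (f := fun t : ℂ => x + t • v) h1 (by fun_prop)

/-- differentiability along lines at all parameters. -/
lemma line (h : Hol Ω φ) (x v : E) (t : ℂ) (ht : x + t • v ∈ Ω) :
    DifferentiableAt ℂ (fun t : ℂ => φ (x + t • v)) t := by
  have h1 := h.2 _ ht v
  have h2 : DifferentiableAt ℂ (fun s : ℂ => φ (x + t • v + s • v)) (t - t) := by simpa using h1
  have h3 := DifferentiableAt.comp t (f := fun s : ℂ => s - t) h2 (by fun_prop)
  refine h3.congr_of_eventuallyEq (Eventually.of_forall fun s => ?_)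
  simp only [Function.comp, add_assoc, ← add_smul]
  congr 3; ring

end Hol

/-- parametric circle integrals -/
lemma Hol.circleIntegral {Y : Type*} [NormedAddCommGroup Y] [NormedSpace ℂ Y] {O : Set Y}
    (hO : IsOpen O) {ρ : ℝ} (hρ : 0 < ρ) {k : ℂ → Y → ℂ}
    (hc : ContinuousOn (fun p : ℂ × Y => k p.1 p.2) (sphere 0 ρ ×ˢ O))
    (hd : ∀ w ∈ sphere (0:ℂ) ρ, ∀ y ∈ O, ∀ v : Y,
      DifferentiableAt ℂ (fun t : ℂ => k w (y + t • v)) 0) :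
    Hol O (fun y => ∮ w in C(0, ρ), k w y) := by
  have hsph : ∀ θ : ℝ, circleMap 0 ρ θ ∈ sphere (0:ℂ) ρ := fun θ => circleMap_mem_sphere 0 hρ.le θ
  have hcc : ContinuousOn (fun p : Y × ℝ => deriv (circleMap 0 ρ) p.2 • k (circleMap 0 ρ p.2) p.1)
      (O ×ˢ univ) := by
    simp only [smul_eq_mul]
    refine ContinuousOn.mul ?_ ?_
    · simp only [deriv_circleMap]; fun_prop
    · exact hc.comp (f := fun p : Y × ℝ => (circleMap 0 ρ p.2, p.1)) (by fun_prop)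
        (fun p hp => ⟨hsph _, hp.1⟩)
  refine ⟨?_, ?_⟩
  · rw [continuousOn_iff_continuous_domRestrict]
    refine intervalIntegral.continuous_parametric_intervalIntegral_of_continuous' ?_ 0 (2 * Real.pi)
    have h1 : Continuous fun p : O × ℝ => ((p.1 : Y), p.2) := by fun_prop
    exact hcc.comp_continuous h1 (fun p => ⟨p.1.2, mem_univ _⟩)
  · intro y hy v
    -- a small disc
    have hcont : Continuous fun t : ℂ => y + t • v := by fun_prop
    have hop : IsOpen ((fun t : ℂ => y + t • v) ⁻¹' O) := hO.preimage hcont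
    obtain ⟨R, hR, hRO⟩ := Metric.isOpen_iff.1 hop 0 (by simpa using hy)
    set r := R / 2 with hr
    have hr0 : 0 < r := by positivity
    have hrO : ∀ t ∈ closedBall (0:ℂ) r, y + t • v ∈ O := fun t ht =>
      hRO (by simp at ht ⊢; linarith)
    set F : ℂ → ℝ → ℂ := fun t θ => deriv (circleMap 0 ρ) θ • k (circleMap 0 ρ θ) (y + t • v)
    have hFc : ContinuousOn (fun p : ℂ × ℝ => F p.1 p.2) (closedBall 0 r ×ˢ univ) :=
      hcc.comp (f := fun p : ℂ × ℝ => (y + p.1 • v, p.2)) (by fun_prop)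
        (fun p hp => ⟨hrO _ hp.1, mem_univ _⟩)
    have hFθ : ∀ t ∈ closedBall (0:ℂ) r, Continuous (F t) := fun t ht =>
      hFc.comp_continuous (f := fun θ : ℝ => (t, θ)) (by fun_prop) (fun θ => ⟨ht, mem_univ _⟩)
    have hFd : ∀ θ, ∀ t ∈ closedBall (0:ℂ) r, DifferentiableAt ℂ (fun t => F t θ) t := by
      intro θ t ht
      have h1 : DifferentiableAt ℂ (fun t : ℂ => k (circleMap 0 ρ θ) (y + t • v)) t := by
        have h1 := hd _ (hsph θ) _ (hrO t ht) v
        have h2 : DifferentiableAt ℂ (fun s : ℂ => k (circleMap 0 ρ θ) (y + t • v + s • v)) (t - t) := by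
          simpa using h1
        have h3 := DifferentiableAt.comp t (f := fun s : ℂ => s - t) h2 (by fun_prop)
        refine h3.congr_of_eventuallyEq (Eventually.of_forall fun s => ?_)
        simp only [Function.comp, add_assoc, ← add_smul]
        congr 3; ring
      exact h1.const_mul (deriv (circleMap 0 ρ) θ)
    obtain ⟨M, hM⟩ : ∃ M, ∀ p ∈ closedBall (0:ℂ) r ×ˢ Icc (0:ℝ) (2 * Real.pi), ‖F p.1 p.2‖ ≤ M :=
      ((isCompact_closedBall _ _).prod isCompact_Icc).exists_bound_of_continuousOn
        (hFc.mono (prod_mono_right (subset_univ _)))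
    have key := intervalIntegral.hasDerivAt_integral_of_dominated_loc_of_deriv_le
      (μ := MeasureTheory.volume) (a := 0) (b := 2 * Real.pi)
      (F := F) (F' := fun t θ => deriv (fun t => F t θ) t) (x₀ := 0) (s := ball 0 (r/2))
      (bound := fun _ => M / (r / 2)) (ball_mem_nhds _ (by positivity)) ?_ ?_ ?_ ?_ ?_ ?_
    · exact key.2.differentiableAt
    · filter_upwards [closedBall_mem_nhds (0:ℂ) hr0] with t ht
      exact (hFθ t ht).aestronglyMeasurable
    · exact (hFθ 0 (by simp [hr0.le])).intervalIntegrable _ _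
    · -- measurability of the derivative
      have hseq : Tendsto (fun n : ℕ => ((r / (n + 1) : ℝ) : ℂ)) atTop (𝓝[≠] 0) := by
        rw [tendsto_nhdsWithin_iff]
        refine ⟨?_, Eventually.of_forall fun n => ?_⟩
        · have : Tendsto (fun n : ℕ => (r / ((n:ℝ) + 1) : ℝ)) atTop (𝓝 0) := by
            have := (tendsto_one_div_add_atTop_nhds_zero_nat (𝕜 := ℝ)).const_mul r
            simpa [div_eq_mul_inv] using this
          exact_mod_cast (Complex.continuous_ofReal.tendsto 0).comp this
        · simp only [mem_compl_iff, mem_singleton_iff, Complex.ofReal_eq_zero]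
          positivity
      refine aestronglyMeasurable_of_tendsto_ae (u := (atTop : Filter ℕ))
        (f := fun (n : ℕ) θ => slope (fun t => F t θ) 0 ((r / (n + 1) : ℝ) : ℂ)) ?_ ?_
      · intro n
        refine Continuous.aestronglyMeasurable ?_
        simp only [slope_def_field]
        refine Continuous.div_const (Continuous.sub (hFθ _ ?_) (hFθ 0 (by simp [hr0.le]))) _
        simp only [mem_closedBall, dist_zero_right, Complex.norm_real, Real.norm_eq_abs]
        rw [abs_of_nonneg (by positivity)]
        exact div_le_self hr0.le (by linarith [Nat.cast_nonneg (α := ℝ) n])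
      · refine Eventually.of_forall fun θ => ?_
        have := (hFd θ 0 (by simp [hr0.le])).hasDerivAt
        rw [hasDerivAt_iff_tendsto_slope] at this
        exact this.comp hseq
    · refine Eventually.of_forall fun θ hθ t ht => ?_
      refine norm_deriv_le_of_forall_mem_sphere_norm_le (by positivity) ?_ ?_
      · have hsub : closedBall t (r/2) ⊆ closedBall 0 r := by
          intro s hs
          simp only [mem_closedBall, mem_ball, dist_zero_right] at *
          have := norm_le_norm_add_norm_sub' s t
          rw [dist_eq_norm] at hs
          linarith
        have : DifferentiableOn ℂ (fun t => F t θ) (closedBall t (r/2)) := fun s hs =>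
          (hFd θ s (hsub hs)).differentiableWithinAt
        rw [← closure_ball _ (by positivity)] at this
        exact this.diffContOnCl
      · intro s hs
        refine hM (s, θ) ⟨?_, ?_⟩
        · simp only [mem_closedBall, mem_ball, dist_zero_right, mem_sphere] at *
          have := norm_le_norm_add_norm_sub' s t
          rw [dist_eq_norm] at hs
          linarith
        · rw [uIoc_of_le (by positivity)] at hθ
          exact ⟨hθ.1.le, hθ.2⟩
    · exact intervalIntegrable_const
    · refine Eventually.of_forall fun θ hθ t ht => ?_
      exact (hFd θ t (ball_subset_closedBall (ball_subset_ball (by linarith) ht))).hasDerivAt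


/-- splitting off one zero -/
lemma split_zero {S : Set ℂ} (hS : IsOpen S) {h : ℂ → ℂ} (hh : DifferentiableOn ℂ h S)
    {a : ℂ} (ha : a ∈ S) (hne : ∀ᶠ w in 𝓝[≠] a, h w ≠ 0) :
    ∃ (k : ℕ) (u : ℂ → ℂ), DifferentiableOn ℂ u S ∧ u a ≠ 0 ∧
      ∀ w ∈ S, h w = (w - a) ^ k * u w := by
  have han : AnalyticAt ℂ h a := hh.analyticAt (hS.mem_nhds ha)
  have hfin : ¬ ∀ᶠ z in 𝓝 a, h z = 0 := by
    intro h0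
    have h1 := (h0.filter_mono (nhdsWithin_le_nhds (s := {a}ᶜ))).and hne
    obtain ⟨z, hz⟩ := h1.exists
    exact hz.2 hz.1
  obtain ⟨k, g, hg, hga, hgh⟩ := han.exists_eventuallyEq_pow_smul_nonzero_iff.2 hfin
  refine ⟨k, fun w => if w = a then g a else h w / (w - a) ^ k, ?_, by simpa using hga, ?_⟩
  · intro w hw
    by_cases hwa : w = a
    · subst hwa
      refine DifferentiableAt.differentiableWithinAt ?_
      refine hg.differentiableAt.congr_of_eventuallyEq ?_
      filter_upwards [hgh] with z hz
      by_cases hzw : z = w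
      · simp [hzw]
      · have : (z - w) ^ k ≠ 0 := pow_ne_zero _ (sub_ne_zero.2 hzw)
        simp only [hzw, if_false, hz, smul_eq_mul]
        field_simp
    · refine DifferentiableAt.differentiableWithinAt ?_
      have h1 : DifferentiableAt ℂ (fun w => h w / (w - a) ^ k) w :=
        (hh.differentiableAt (hS.mem_nhds hw)).div (by fun_prop)
          (pow_ne_zero _ (sub_ne_zero.2 hwa))
      refine h1.congr_of_eventuallyEq ?_
      filter_upwards [isOpen_ne.mem_nhds hwa] with z hz
      simp [show z ≠ a from hz]
  · intro w hw
    by_cases hwa : w = a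
    · subst hwa
      simpa using hgh.self_of_nhds
    · have : (w - a) ^ k ≠ 0 := pow_ne_zero _ (sub_ne_zero.2 hwa)
      simp only [hwa, if_false]
      field_simp

lemma factor_zeros {S : Set ℂ} (hS : IsOpen S) {K : Set ℂ} (hKS : K ⊆ S) (n : ℕ) :
    ∀ {h : ℂ → ℂ}, DifferentiableOn ℂ h S → (∀ a ∈ K, ∀ᶠ w in 𝓝[≠] a, h w ≠ 0) →
    ({w ∈ K | h w = 0}).Finite → ({w ∈ K | h w = 0}).ncard = n →
    ∃ (l : List ℂ) (u : ℂ → ℂ), (∀ a ∈ l, a ∈ K ∧ h a = 0) ∧ DifferentiableOn ℂ u S ∧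
      (∀ w ∈ K, u w ≠ 0) ∧ ∀ w ∈ S, h w = (l.map (fun a => w - a)).prod * u w := by
  induction n with
  | zero =>
    intro h hh hne hfin hcard
    rw [ncard_eq_zero hfin] at hcard
    refine ⟨[], h, by simp, hh, fun w hw h0 => ?_, by simp⟩
    have : w ∈ {w ∈ K | h w = 0} := ⟨hw, h0⟩
    simp [hcard] at this
  | succ n ih =>
    intro h hh hne hfin hcard
    have hnon : ({w ∈ K | h w = 0}).Nonempty := by
      rw [← ncard_pos hfin]; omega
    obtain ⟨a, haK, ha0⟩ := hnon
    obtain ⟨k, u, hu, hua, hhu⟩ := split_zero hS hh (hKS haK) (hne a haK)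
    have hk : k ≠ 0 := by
      rintro rfl
      have := hhu a (hKS haK)
      simp [ha0] at this
      exact hua this.symm
    have hset : {w ∈ K | u w = 0} = {w ∈ K | h w = 0} \ {a} := by
      ext w
      simp only [mem_ofPred_eq, Set.mem_sdiff, mem_singleton_iff]
      constructor
      · rintro ⟨h1, h2⟩
        exact ⟨⟨h1, by simp [hhu w (hKS h1), h2]⟩, by rintro rfl; exact hua h2⟩
      · rintro ⟨⟨h1, h2⟩, h3⟩
        rw [hhu w (hKS h1)] at h2
        exact ⟨h1, (mul_eq_zero.1 h2).resolve_left (pow_ne_zero _ (sub_ne_zero.2 h3))⟩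
    have hcu : ({w ∈ K | u w = 0}).ncard = n := by
      have hm : a ∈ {w ∈ K | h w = 0} := ⟨haK, ha0⟩
      rw [hset, ncard_sdiff_singleton_of_mem hm, hcard]; rfl
    obtain ⟨l, u', hl, hu', hu'0, hprod⟩ := ih (h := u) hu (by
      intro b hb
      have hSb : ∀ᶠ w in 𝓝[≠] b, w ∈ S := nhdsWithin_le_nhds (hS.mem_nhds (hKS hb))
      filter_upwards [hne b hb, hSb] with w h1 h2 h3
      exact h1 (by simp [hhu w h2, h3])) (by rw [hset]; exact hfin.subset sdiff_subset) hcu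
    refine ⟨List.replicate k a ++ l, u', ?_, hu', hu'0, ?_⟩
    · intro b hb
      rcases List.mem_append.1 hb with hb | hb
      · rw [List.eq_of_mem_replicate hb]; exact ⟨haK, ha0⟩
      · have := hl b hb
        exact ⟨this.1, by simp [hhu b (hKS this.1), this.2]⟩
    · intro w hw
      rw [hhu w hw, hprod w hw]
      simp [mul_assoc]

lemma residue_sum {S : Set ℂ} (hS : IsOpen S) {ρ : ℝ} (hρ : 0 < ρ) (hKS : closedBall 0 ρ ⊆ S)
    {u φ : ℂ → ℂ} (hu : DifferentiableOn ℂ u S) (hu0 : ∀ w ∈ closedBall 0 ρ, u w ≠ 0)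
    (hφ : DifferentiableOn ℂ φ S) (l : List ℂ) (hl : ∀ a ∈ l, a ∈ ball 0 ρ) :
    CircleIntegrable (fun w => φ w * logDeriv (fun w => (l.map (fun a => w - a)).prod * u w) w) 0 ρ ∧
    (∮ w in C(0, ρ), φ w * logDeriv (fun w => (l.map (fun a => w - a)).prod * u w) w)
      = 2 * Real.pi * I * (l.map φ).sum := by
  induction l with
  | nil =>
    have hd : DifferentiableOn ℂ (fun w => φ w * logDeriv u w) (closedBall 0 ρ) := by
      have hdu : DifferentiableOn ℂ (deriv u) S := hu.deriv hS
      exact (hφ.mono hKS).mul ((hdu.mono hKS).div (hu.mono hKS) hu0)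
    have h1 : (∮ w in C(0, ρ), φ w * logDeriv u w) = 0 := by
      refine circleIntegral_eq_zero_of_differentiable_on_off_countable hρ.le countable_empty
        hd.continuousOn ?_
      intro z hz
      exact hd.differentiableAt (mem_of_superset (isOpen_ball.mem_nhds hz.1) ball_subset_closedBall)
    simp only [List.map_nil, List.prod_nil, one_mul, List.sum_nil, mul_zero]
    exact ⟨(hd.continuousOn.mono sphere_subset_closedBall).circleIntegrable hρ.le, h1⟩
  | cons a l ih =>
    obtain ⟨ih1, ih2⟩ := ih (fun b hb => hl b (by simp [hb]))
    have haρ := hl a (by simp)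
    have hpa : ∀ z ∈ sphere (0:ℂ) ρ, ∀ b ∈ ball (0:ℂ) ρ, z - b ≠ 0 := by
      intro z hz b hb h0
      rw [sub_eq_zero.1 h0] at hz
      simp at hz hb; linarith
    have heq : ∀ z ∈ sphere (0:ℂ) ρ,
        φ z * logDeriv (fun w => ((a :: l).map (fun a => w - a)).prod * u w) z =
        (z - a)⁻¹ • φ z + φ z * logDeriv (fun w => (l.map (fun a => w - a)).prod * u w) z := by
      intro z hz
      have hzS := hKS (sphere_subset_closedBall hz)
      have h1 : (fun w => ((a :: l).map (fun a => w - a)).prod * u w) =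
        fun w => (w - a) * ((l.map (fun a => w - a)).prod * u w) := by
        ext w; simp [mul_assoc]
      have hdl : ∀ l : List ℂ, DifferentiableAt ℂ (fun w => (l.map (fun a => w - a)).prod) z := by
        intro l
        induction l with
        | nil => simp
        | cons b l ih => 
          simp only [List.map_cons, List.prod_cons]
          exact (by fun_prop : DifferentiableAt ℂ (fun w => w - b) z).mul ih
      have hd2 : DifferentiableAt ℂ (fun w => (l.map (fun a => w - a)).prod * u w) z :=
        (hdl l).mul (hu.differentiableAt (hS.mem_nhds hzS))
      rw [h1, logDeriv_mul (f := fun w => w - a)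
        (g := fun w => (l.map (fun a => w - a)).prod * u w) z (hpa z hz a haρ) ?_
        (by fun_prop) hd2]
      · have : logDeriv (fun w => w - a) z = (z - a)⁻¹ := by
          simp [logDeriv_apply]
        rw [this]; simp; ring
      · refine mul_ne_zero ?_ (hu0 _ (sphere_subset_closedBall hz))
        intro h0
        rw [List.prod_eq_zero_iff] at h0
        obtain ⟨b, hb, hb0⟩ := List.mem_map.1 h0
        exact hpa z hz b (hl b (by simp [hb])) hb0
    have hint : CircleIntegrable (fun z => (z - a)⁻¹ • φ z) 0 ρ := by
      refine ContinuousOn.circleIntegrable hρ.le ?_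
      refine ContinuousOn.smul (ContinuousOn.inv₀ (by fun_prop) fun z hz => hpa z hz a haρ) ?_
      exact hφ.continuousOn.mono (sphere_subset_closedBall.trans hKS)
    have hca : (∮ z in C(0, ρ), (z - a)⁻¹ • φ z) = (2 * Real.pi * I : ℂ) • φ a :=
      (hφ.mono hKS).circleIntegral_sub_inv_smul haρ
    constructor
    · refine (hint.add ih1).congr ?_
      intro z hz
      exact (heq _ (circleMap_mem_sphere 0 hρ.le z)).symm
    · rw [circleIntegral.integral_congr hρ.le heq, circleIntegral.integral_add hint ih1, ih2, hca]
      simp; ring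

/-- argument principle on a disc -/
lemma arg_principle {S : Set ℂ} (hS : IsOpen S) {ρ : ℝ} (hρ : 0 < ρ) (hKS : closedBall 0 ρ ⊆ S)
    {h : ℂ → ℂ} (hh : DifferentiableOn ℂ h S) (h0 : ∀ w ∈ sphere (0:ℂ) ρ, h w ≠ 0) :
    ∃ (p : ℕ) (a : Fin p → ℂ), (∀ i, a i ∈ ball (0:ℂ) ρ) ∧
      (∀ w ∈ ball (0:ℂ) ρ, h w = 0 ↔ ∃ i, w = a i) ∧
      ∀ φ : ℂ → ℂ, DifferentiableOn ℂ φ S →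
        (∮ w in C(0, ρ), φ w * logDeriv h w) = 2 * Real.pi * I * ∑ i, φ (a i) := by
  have han : AnalyticOnNhd ℂ h (closedBall 0 ρ) := fun z hz => hh.analyticAt (hS.mem_nhds (hKS hz))
  have hconn : IsPreconnected (closedBall (0:ℂ) ρ) := (convex_closedBall _ _).isPreconnected
  have hρs : (ρ : ℂ) ∈ sphere (0:ℂ) ρ := by simp [abs_of_pos hρ]
  have hne : ∀ a ∈ closedBall (0:ℂ) ρ, ∀ᶠ w in 𝓝[≠] a, h w ≠ 0 := by
    intro a ha
    rcases (han a ha).eventually_eq_zero_or_eventually_ne_zero with h1 | h1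
    · exact absurd (han.eqOn_zero_of_preconnected_of_eventuallyEq_zero hconn ha h1
        (sphere_subset_closedBall hρs)) (h0 _ hρs)
    · exact h1
  have hfin : ({w ∈ closedBall (0:ℂ) ρ | h w = 0}).Finite := by
    by_contra hinf
    obtain ⟨a, ha, hacc⟩ := Set.Infinite.exists_accPt_of_subset_isCompact hinf
      (isCompact_closedBall (0:ℂ) ρ) (sep_subset _ _)
    rw [accPt_iff_frequently_nhdsNE] at hacc
    exact hacc ((hne a ha).mono fun w hw hw' => hw hw'.2)
  obtain ⟨l, u, hl, hu, hu0, hfac⟩ := factor_zeros hS hKS _ hh hne hfin rfl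
  have hlb : ∀ a ∈ l, a ∈ ball (0:ℂ) ρ := by
    intro a ha
    obtain ⟨h1, h2⟩ := hl a ha
    by_contra hb
    refine h0 a ?_ h2
    simp at h1 hb ⊢
    linarith
  refine ⟨l.length, l.get, fun i => hlb _ (List.get_mem l i), ?_, ?_⟩
  · intro w hw
    have hwK := ball_subset_closedBall hw
    rw [hfac w (hKS hwK), mul_eq_zero, or_iff_left (hu0 w hwK), List.prod_eq_zero_iff]
    constructor
    · intro hm
      obtain ⟨b, hb, hb0⟩ := List.mem_map.1 hm
      obtain ⟨i, hi⟩ := List.mem_iff_get.1 hb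
      exact ⟨i, by rw [hi]; exact sub_eq_zero.1 hb0⟩
    · rintro ⟨i, rfl⟩
      exact List.mem_map.2 ⟨l.get i, List.get_mem l i, sub_self _⟩
  · intro φ hφ
    have := (residue_sum hS hρ hKS hu hu0 hφ l hlb).2
    rw [circleIntegral.integral_congr (g := fun w => φ w * logDeriv (fun w => (l.map (fun a => w - a)).prod * u w) w) hρ.le, this]
    · congr 1
      rw [← List.sum_ofFn]
      congr 1
      apply List.ext_get <;> simp
    · intro z hz
      have hzS := hKS (sphere_subset_closedBall hz)
      have : h =ᶠ[𝓝 z] (fun w => (l.map (fun a => w - a)).prod * u w) := by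
        filter_upwards [hS.mem_nhds hzS] with w hw using hfac w hw
      simp only [logDeriv_apply, this.deriv_eq, hfac z hzS]


lemma hol_esymm {Y : Type*} [NormedAddCommGroup Y] [NormedSpace ℂ Y] {O : Set Y} {p : ℕ}
    (v : Y → Fin p → ℂ) (h : ∀ k, Hol O (fun y => ∑ i, v y i ^ k)) (k : ℕ) :
    Hol O (fun y => MvPolynomial.aeval (v y) (MvPolynomial.esymm (Fin p) ℂ k)) := by
  induction k using Nat.strong_induction_on with
  | _ k ih =>
    rcases Nat.eq_zero_or_pos k with rfl | hk
    · simpa using Hol.const 1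
    have hk' : (k : ℂ) ≠ 0 := by exact_mod_cast hk.ne'
    have key : ∀ y, MvPolynomial.aeval (v y) (MvPolynomial.esymm (Fin p) ℂ k) =
        (k : ℂ)⁻¹ * ((-1) ^ (k + 1) * ∑ a ∈ Finset.HasAntidiagonal.antidiagonal k with a.1 < k,
          (-1) ^ a.1 * MvPolynomial.aeval (v y) (MvPolynomial.esymm (Fin p) ℂ a.1) *
          ∑ i, v y i ^ a.2) := by
      intro y
      have := congrArg (MvPolynomial.aeval (v y)) (MvPolynomial.mul_esymm_eq_sum (Fin p) ℂ k)
      simp only [map_mul, map_natCast, map_pow, map_neg, map_one, map_sum, MvPolynomial.psum,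
        MvPolynomial.aeval_X] at this
      rw [← this]; field_simp
    simp only [key]
    refine (Hol.const _).mul ((Hol.const _).mul (Hol.sum _ fun a ha => ?_))
    exact ((Hol.const _).mul (ih a.1 (Finset.mem_filter.1 ha).2)).mul (h a.2)

lemma hol_prod_roots {Y : Type*} [NormedAddCommGroup Y] [NormedSpace ℂ Y] {O : Set Y} {p : ℕ}
    (v : Y → Fin p → ℂ) (h : ∀ k, Hol O (fun y => ∑ i, v y i ^ k)) :
    Hol O (fun y => ∏ i, v y i) := by
  have h1 := hol_esymm v h p
  convert h1 using 2 with y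
  rw [MvPolynomial.esymm]
  have : Finset.powersetCard p (Finset.univ : Finset (Fin p)) = {Finset.univ} := by
    have h2 := Finset.powersetCard_self (Finset.univ : Finset (Fin p))
    rwa [Finset.card_fin] at h2
  simp [this]

lemma hol_span {E : Type*} [NormedAddCommGroup E] [NormedSpace ℂ E] {Ω : Set E}
    {F : Set (E → ℂ)} (hF : ∀ φ ∈ F, Hol Ω φ) : ∀ φ ∈ Submodule.span ℂ F, Hol Ω φ := by
  intro φ hφ
  induction hφ using Submodule.span_induction with
  | mem x h => exact hF x h
  | zero => exact Hol.const 0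
  | add x y _ _ hx hy => exact hx.add hy
  | smul a x _ hx => exact (Hol.const a).mul hx

lemma Hol.slice {Y : Type*} [NormedAddCommGroup Y] [NormedSpace ℂ Y] {A : Set ℂ} {O : Set Y}
    {φ : ℂ × Y → ℂ} (h : Hol (A ×ˢ O) φ) {y : Y} (hy : y ∈ O) :
    DifferentiableOn ℂ (fun w => φ (w, y)) A := by
  intro w hw
  have := h.line (0, y) (1, 0) w (by simp [hw, hy])
  simp at this
  exact this.differentiableWithinAt

/-- the derivative in the first variable -/
lemma Hol.deriv_fst {Y : Type*} [NormedAddCommGroup Y] [NormedSpace ℂ Y] {O : Set Y}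
    (hO : IsOpen O) {R R' : ℝ} (hR : 0 < R) (hRR : R < R')
    {h : ℂ × Y → ℂ} (hh : Hol (ball 0 R' ×ˢ O) h) :
    Hol (ball 0 R ×ˢ O) (fun x : ℂ × Y => deriv (fun w => h (w, x.2)) x.1) := by
  have hop : IsOpen (ball (0:ℂ) R ×ˢ O) := isOpen_ball.prod hO
  have hne : ∀ ζ ∈ sphere (0:ℂ) R, ∀ w ∈ ball (0:ℂ) R, (ζ - w) ^ 2 ≠ 0 := by
    intro ζ hζ w hw h0
    have := sub_eq_zero.1 (pow_eq_zero_iff (two_ne_zero) |>.1 h0)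
    subst this
    simp at hζ hw; linarith
  have hsub : sphere (0:ℂ) R ⊆ ball 0 R' := fun z hz => by simp at hz ⊢; linarith
  have key := Hol.circleIntegral hop hR
    (k := fun ζ (x : ℂ × Y) => ((ζ - x.1) ^ 2)⁻¹ * h (ζ, x.2)) ?_ ?_
  · refine ((Hol.const ((2 * Real.pi * I : ℂ)⁻¹)).mul key).congr hop ?_
    rintro ⟨w, y⟩ ⟨hw, hy⟩
    have := two_pi_I_inv_smul_circleIntegral_sub_sq_inv_smul_of_differentiable
      (f := fun w => h (w, y)) (U := ball 0 R') isOpen_ball (c := 0) (R := R) (w₀ := w)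
      (closedBall_subset_ball hRR) (hh.slice hy) hw
    simpa using this.symm
  · refine ContinuousOn.mul (ContinuousOn.inv₀ (by fun_prop) ?_) ?_
    · rintro ⟨ζ, w, y⟩ ⟨h1, h2, h3⟩
      exact hne _ h1 _ h2
    · exact hh.1.comp (f := fun q : ℂ × (ℂ × Y) => (q.1, q.2.2)) (by fun_prop)
        (fun q hq => ⟨hsub hq.1, hq.2.2⟩)
  · rintro ζ hζ ⟨w, y⟩ ⟨hw, hy⟩ ⟨v1, v2⟩
    refine DifferentiableAt.mul ?_ ?_
    · refine DifferentiableAt.inv (by simp) ?_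
      simpa using sub_ne_zero.1 (by simpa using hne ζ hζ w hw)
    · have := hh.2 (ζ, y) ⟨hsub hζ, hy⟩ (0, v2)
      simpa using this

lemma elim {Y : Type*} [NormedAddCommGroup Y] [NormedSpace ℂ Y] {Ω : Set (ℂ × Y)}
    (hΩ : IsOpen Ω) (h0Ω : (0 : ℂ × Y) ∈ Ω) {F : Set (ℂ × Y → ℂ)} (hF : ∀ φ ∈ F, Hol Ω φ)
    {h : ℂ × Y → ℂ} (hhF : h ∈ F) (hne : ∀ᶠ w in 𝓝[≠] (0:ℂ), h (w, 0) ≠ 0) :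
    ∃ ρ > 0, ∃ δ > 0, ball (0:ℂ) ρ ×ˢ ball (0:Y) δ ⊆ Ω ∧
      (∀ w ∈ ball (0:ℂ) ρ, w ≠ 0 → h (w, 0) ≠ 0) ∧
      ∃ G : Set (Y → ℂ), (∀ g ∈ G, Hol (ball (0:Y) δ) g) ∧
        (∀ y ∈ ball (0:Y) δ, (∀ g ∈ G, g y = 0) ↔ ∃ w ∈ ball (0:ℂ) ρ, ∀ φ ∈ F, φ (w, y) = 0) ∧
        ∀ y ∈ ball (0:Y) δ, {w ∈ ball (0:ℂ) ρ | ∀ φ ∈ F, φ (w, y) = 0}.Finite := by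
  -- choose radii
  obtain ⟨A, hA, B, hB, hAB⟩ := mem_nhds_prod_iff.1 (hΩ.mem_nhds h0Ω)
  obtain ⟨R₁, hR₁, hRA⟩ := Metric.mem_nhds_iff.1 hA
  obtain ⟨δ₁, hδ₁, hδB⟩ := Metric.mem_nhds_iff.1 hB
  obtain ⟨R₂, hR₂, hRne⟩ := Metric.mem_nhdsWithin_iff.1 hne
  set ρ := min R₁ R₂ / 3 with hρdef
  have hmin : 0 < min R₁ R₂ := lt_min hR₁ hR₂
  have hρ : 0 < ρ := by positivity
  have hρ1 : 3 * ρ ≤ R₁ := by rw [hρdef]; linarith [min_le_left R₁ R₂]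
  have hρ2 : 3 * ρ ≤ R₂ := by rw [hρdef]; linarith [min_le_right R₁ R₂]
  have hΩ3 : ball (0:ℂ) (3 * ρ) ×ˢ ball (0:Y) δ₁ ⊆ Ω :=
    (Set.prod_mono ((ball_subset_ball hρ1).trans hRA) hδB).trans hAB
  have hpun : ∀ w ∈ ball (0:ℂ) (3 * ρ), w ≠ 0 → h (w, 0) ≠ 0 := fun w hw hw0 =>
    hRne ⟨ball_subset_ball hρ2 hw, hw0⟩
  have hhol3 : Hol (ball (0:ℂ) (3 * ρ) ×ˢ ball (0:Y) δ₁) h := (hF h hhF).mono hΩ3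
  have hop3 : IsOpen (ball (0:ℂ) (3 * ρ) ×ˢ ball (0:Y) δ₁) := isOpen_ball.prod isOpen_ball
  -- nonvanishing near the sphere
  have hopen : IsOpen ((ball (0:ℂ) (3 * ρ) ×ˢ ball (0:Y) δ₁) ∩ h ⁻¹' {0}ᶜ) :=
    hhol3.1.isOpen_inter_preimage hop3 isOpen_compl_singleton
  obtain ⟨T, B', hT, hB', hsT, h0B', hTB⟩ := generalized_tube_lemma (isCompact_sphere (0:ℂ) ρ)
    (isCompact_singleton (x := (0:Y))) hopen (by
      rintro ⟨w, y⟩ ⟨hw, hy⟩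
      simp only [mem_singleton_iff] at hy
      subst hy
      have hw' : w ∈ ball (0:ℂ) (3 * ρ) := by simp at hw ⊢; linarith
      refine ⟨⟨hw', by simpa using hδ₁⟩, hpun w hw' ?_⟩
      rintro rfl
      simp at hw; linarith)
  obtain ⟨δ, hδ, hδB'⟩ := Metric.isOpen_iff.1 hB' 0 (h0B' (mem_singleton _))
  have hTne : ∀ w ∈ T, ∀ y ∈ ball (0:Y) δ, h (w, y) ≠ 0 := fun w hw y hy =>
    (hTB ⟨hw, hδB' hy⟩).2
  have hTsub : T ⊆ ball (0:ℂ) (3 * ρ) := fun w hw =>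
    (hTB (mk_mem_prod hw (h0B' (mem_singleton (0:Y))))).1.1
  have hδ1 : ball (0:Y) δ ⊆ ball 0 δ₁ := by
    obtain ⟨w, hw⟩ : (sphere (0:ℂ) ρ).Nonempty := ⟨(ρ : ℂ), by simp [abs_of_pos hρ]⟩
    exact fun y hy => (hTB (mk_mem_prod (hsT hw) (hδB' hy))).1.2
  -- roots
  have hsl : ∀ φ, Hol (ball (0:ℂ) (3 * ρ) ×ˢ ball (0:Y) δ₁) φ → ∀ y ∈ ball (0:Y) δ,
    DifferentiableOn ℂ (fun w => φ (w, y)) (ball 0 (3*ρ)) := fun φ hφ y hy => hφ.slice (hδ1 hy)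
  have hroots : ∀ y ∈ ball (0:Y) δ, ∃ (p : ℕ) (a : Fin p → ℂ), (∀ i, a i ∈ ball (0:ℂ) ρ) ∧
      (∀ w ∈ ball (0:ℂ) ρ, h (w, y) = 0 ↔ ∃ i, w = a i) ∧
      ∀ φ : ℂ → ℂ, DifferentiableOn ℂ φ (ball 0 (3*ρ)) →
        (∮ w in C(0, ρ), φ w * logDeriv (fun w => h (w, y)) w) = 2 * Real.pi * I * ∑ i, φ (a i) :=
    fun y hy => arg_principle isOpen_ball hρ (closedBall_subset_ball (by linarith))
      (hsl h hhol3 y hy) (fun w hw => hTne w (hsT hw) y hy)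
  -- holomorphy of integrals
  have hint : ∀ φ, Hol (ball (0:ℂ) (3 * ρ) ×ˢ ball (0:Y) δ₁) φ →
      Hol (ball (0:Y) δ) (fun y => (2 * Real.pi * I : ℂ)⁻¹ *
        ∮ w in C(0, ρ), φ (w, y) * logDeriv (fun w => h (w, y)) w) := by
    intro φ hφ
    have h2 : Hol ((T ∩ ball 0 (2 * ρ)) ×ˢ ball (0:Y) δ) (fun x : ℂ × Y =>
        φ (x.1, x.2) * logDeriv (fun w => h (w, x.2)) x.1) := by
      have hd := Hol.deriv_fst isOpen_ball (R := 2 * ρ) (R' := 3 * ρ) (by linarith) (by linarith) hhol3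
      refine Hol.mul (hφ.mono (Set.prod_mono (inter_subset_left.trans hTsub) hδ1)) ?_
      refine Hol.div (hd.mono (Set.prod_mono inter_subset_right hδ1))
        (hhol3.mono (Set.prod_mono (inter_subset_left.trans hTsub) hδ1)) ?_
      rintro ⟨w, y⟩ ⟨hw, hy⟩
      exact hTne w hw.1 y hy
    have hss : sphere (0:ℂ) ρ ⊆ T ∩ ball 0 (2 * ρ) := fun w hw =>
      ⟨hsT hw, by simp at hw ⊢; linarith⟩
    refine (Hol.const _).mul (Hol.circleIntegral isOpen_ball hρ ?_ ?_)
    · exact h2.1.mono (Set.prod_mono_left hss)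
    · intro w hw y hy v
      have := h2.2 (w, y) ⟨hss hw, hy⟩ (0, v)
      simpa using this
  choose! pp aa haa hz hres using hroots
  have hpi : (2 * Real.pi * I : ℂ) ≠ 0 := Complex.two_pi_I_ne_zero
  -- constancy of the number of roots
  have hpconst : ∀ y ∈ ball (0:Y) δ, pp y = pp 0 := by
    have hc := (hint (fun _ => 1) (Hol.const 1)).1
    have hc' : ContinuousOn (fun y => (pp y : ℂ)) (ball (0:Y) δ) := by
      refine hc.congr fun y hy => ?_
      have := hres y hy (fun _ => 1) (differentiableOn_const _)
      simp only [this, inv_mul_cancel_left₀ hpi]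
      simp
    have hc2 : ContinuousOn pp (ball (0:Y) δ) := by
      have hemb : IsEmbedding (fun n : ℕ => (n : ℂ)) := by
        have h1 := Complex.isometry_ofReal.isEmbedding.comp Nat.isClosedEmbedding_coe_real.isEmbedding
        convert h1 using 1
        ext n <;> simp
      rw [hemb.continuousOn_iff]
      exact hc'
    intro y hy
    exact (convex_ball (0:Y) δ).isPreconnected.constant hc2 hy (mem_ball_self hδ)
  have hex : ∀ y ∈ ball (0:Y) δ, ∃ a : Fin (pp 0) → ℂ, (∀ i, a i ∈ ball (0:ℂ) ρ) ∧
      (∀ w ∈ ball (0:ℂ) ρ, h (w, y) = 0 ↔ ∃ i, w = a i) ∧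
      ∀ φ : ℂ → ℂ, DifferentiableOn ℂ φ (ball 0 (3*ρ)) →
        (∮ w in C(0, ρ), φ w * logDeriv (fun w => h (w, y)) w) = 2 * Real.pi * I * ∑ i, φ (a i) := by
    intro y hy
    rw [← hpconst y hy]
    exact ⟨aa y, haa y hy, hz y hy, hres y hy⟩
  clear hz hres haa
  choose! b hb hbz hbres using hex
  have hspan : ∀ φ ∈ Submodule.span ℂ F, Hol (ball (0:ℂ) (3 * ρ) ×ˢ ball (0:Y) δ₁) φ :=
    fun φ hφ => (hol_span hF φ hφ).mono hΩ3
  refine ⟨ρ, hρ, δ, hδ, (Set.prod_mono (ball_subset_ball (by linarith)) hδ1).trans hΩ3,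
    fun w hw => hpun w (ball_subset_ball (by linarith) hw),
    (fun φ : ℂ × Y → ℂ => fun y : Y => ∏ i, φ (b y i, y)) '' (Submodule.span ℂ F : Set (ℂ × Y → ℂ)),
    ?_, ?_, ?_⟩
  · rintro _ ⟨φ, hφ, rfl⟩
    refine hol_prod_roots (fun y i => φ (b y i, y)) (fun k => ?_)
    have hφk := (hspan φ hφ).pow k
    refine (hint _ hφk).congr isOpen_ball fun y hy => ?_
    rw [hbres y hy (fun w => φ (w, y) ^ k) (hsl _ hφk y hy)]
    field_simp
  · intro y hy
    constructor
    · intro hall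
      by_contra hno
      push Not at hno
      -- for each root, the subspace of functions vanishing there is proper
      let ev : Fin (pp 0) → (Submodule.span ℂ F →ₗ[ℂ] ℂ) := fun i =>
        (LinearMap.proj (R := ℂ) (φ := fun _ : ℂ × Y => ℂ) (b y i, y)).comp (Submodule.span ℂ F).subtype
      have hker : ∀ i, (ev i).ker ≠ ⊤ := by
        intro i htop
        obtain ⟨φ, hφ, hφ0⟩ := hno (b y i) (hb y hy i)
        have : (⟨φ, Submodule.subset_span hφ⟩ : Submodule.span ℂ F) ∈ (ev i).ker := by
          rw [htop]; trivial
        exact hφ0 (by simpa [ev] using this)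
      have hun := Subspace.biUnion_ne_univ_of_top_notMem
        (s := Finset.univ.image fun i => (ev i).ker) (by
          intro hm
          obtain ⟨i, -, hi⟩ := Finset.mem_image.1 hm
          exact hker i hi)
      apply hun
      rw [eq_univ_iff_forall]
      rintro ⟨φ, hφ⟩
      have := hall _ ⟨φ, hφ, rfl⟩
      obtain ⟨i, -, hi⟩ := Finset.prod_eq_zero_iff.1 this
      simp only [mem_iUnion]
      exact ⟨(ev i).ker, Finset.mem_image.2 ⟨i, Finset.mem_univ _, rfl⟩, by simpa [ev] using hi⟩
    · rintro ⟨w, hw, hw0⟩ _ ⟨φ, hφ, rfl⟩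
      obtain ⟨i, rfl⟩ := (hbz y hy w hw).1 (hw0 h hhF)
      refine Finset.prod_eq_zero (Finset.mem_univ i) ?_
      have hφ' : φ ∈ Submodule.span ℂ F := hφ
      clear hφ
      induction hφ' using Submodule.span_induction with
      | mem x h => exact hw0 x h
      | zero => rfl
      | add x y _ _ hx hy => simp [hx, hy]
      | smul a x _ hx => simp [hx]
  · intro y hy
    refine (finite_range (b y)).subset ?_
    rintro w ⟨hw, hw0⟩
    obtain ⟨i, hi⟩ := (hbz y hy w hw).1 (hw0 h hhF)
    exact ⟨i, hi.symm⟩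


lemma Hol.eventually_ne {E : Type*} [NormedAddCommGroup E] [NormedSpace ℂ E] {R : ℝ}
    {φ : E → ℂ} (h : Hol (ball 0 R) φ) {v : E} (hv : v ∈ ball 0 R) (hv0 : φ v ≠ 0) :
    ∀ᶠ t in 𝓝[≠] (0:ℂ), φ (t • v) ≠ 0 := by
  have hR : 0 < R := by simp at hv; linarith [norm_nonneg v]
  set S : Set ℂ := (fun t : ℂ => t • v) ⁻¹' ball 0 R
  have hS : IsOpen S := isOpen_ball.preimage (by fun_prop)
  have hd : DifferentiableOn ℂ (fun t : ℂ => φ (t • v)) S := by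
    intro t ht
    have := h.line 0 v t (by simpa [S] using ht)
    simpa using this.differentiableWithinAt
  have han : AnalyticOnNhd ℂ (fun t : ℂ => φ (t • v)) S := hd.analyticOnNhd hS
  have hconn : IsPreconnected S := by
    have : Convex ℝ S := by
      have := (convex_ball (0:E) R).linear_preimage
        ((LinearMap.toSpanSingleton ℂ E v).restrictScalars ℝ)
      exact this
    exact this.isPreconnected
  have h0S : (0:ℂ) ∈ S := by simp [S, hR]
  have h1S : (1:ℂ) ∈ S := by simpa [S] using hv
  rcases (han 0 h0S).eventually_eq_zero_or_eventually_ne_zero with h1 | h1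
  · exact absurd (by simpa using han.eqOn_zero_of_preconnected_of_eventuallyEq_zero hconn h0S h1 h1S) hv0
  · exact h1

/-- finiteness of nearby fibres -/
lemma finite_fibres (N : ℕ) : ∀ (P : Type) [NormedAddCommGroup P] [NormedSpace ℂ P]
    (Ω : Set ((Fin N → ℂ) × P)), IsOpen Ω → (0 : (Fin N → ℂ) × P) ∈ Ω →
    ∀ F : Set ((Fin N → ℂ) × P → ℂ), (∀ φ ∈ F, Hol Ω φ) →
    (∀ z, (z, (0:P)) ∈ Ω → (∀ φ ∈ F, φ (z, 0) = 0) → z = 0) →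
    ∃ W ∈ 𝓝 (0 : Fin N → ℂ), ∃ W' ∈ 𝓝 (0 : P), W ×ˢ W' ⊆ Ω ∧
      ∀ p ∈ W', {z ∈ W | ∀ φ ∈ F, φ (z, p) = 0}.Finite := by
  induction N with
  | zero =>
    intro P _ _ Ω hΩ h0 F hF hiso
    obtain ⟨W, hW, W', hW', hsub⟩ := mem_nhds_prod_iff.1 (hΩ.mem_nhds h0)
    exact ⟨W, hW, W', hW', hsub, fun p hp => toFinite _⟩
  | succ N ih =>
    intro P _ _ Ω hΩ h0 F hF hiso
    let L : (ℂ × ((Fin N → ℂ) × P)) →L[ℂ] ((Fin (N+1) → ℂ) × P) :=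
      ((Fin.consEquivL ℂ (fun _ : Fin (N+1) => ℂ)).toContinuousLinearMap.comp
        ((ContinuousLinearMap.fst ℂ ℂ ((Fin N → ℂ) × P)).prod
          ((ContinuousLinearMap.fst ℂ (Fin N → ℂ) P).comp (ContinuousLinearMap.snd ℂ ℂ ((Fin N → ℂ) × P))))).prod
        ((ContinuousLinearMap.snd ℂ (Fin N → ℂ) P).comp (ContinuousLinearMap.snd ℂ ℂ ((Fin N → ℂ) × P)))
    have hL : ∀ w z p, L (w, (z, p)) = (Fin.cons w z, p) := fun w z p => rfl
    -- shrink
    set Ω₁ := L ⁻¹' Ω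
    have hΩ₁ : IsOpen Ω₁ := hΩ.preimage L.continuous
    have h0₁ : (0 : ℂ × ((Fin N → ℂ) × P)) ∈ Ω₁ := by simpa [Ω₁] using h0
    obtain ⟨R, hR, hRΩ⟩ := Metric.isOpen_iff.1 hΩ₁ 0 h0₁
    set F₁ : Set (ℂ × ((Fin N → ℂ) × P) → ℂ) := (fun φ => fun x => φ (L x)) '' F
    have hF₁ : ∀ φ ∈ F₁, Hol Ω₁ φ := by
      rintro _ ⟨φ, hφ, rfl⟩
      exact (hF φ hφ).comp L
    have hv : (((R/2 : ℝ) : ℂ), ((0 : Fin N → ℂ), (0:P))) ∈ ball (0 : ℂ × ((Fin N → ℂ) × P)) R := by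
      simp [Prod.norm_def, abs_of_pos hR, hR]
    obtain ⟨φ, hφ, hφ0⟩ : ∃ φ ∈ F₁, φ (((R/2 : ℝ) : ℂ), ((0 : Fin N → ℂ), (0:P))) ≠ 0 := by
      by_contra hno
      push Not at hno
      have := hiso (Fin.cons ((R/2 : ℝ) : ℂ) 0) (by have := hRΩ hv; simpa [Ω₁, hL] using this)
        (fun φ hφ => by
          have := hno _ ⟨φ, hφ, rfl⟩
          simpa only [hL] using this)
      have := congrFun this 0
      simp at this
      exact hR.ne' this
    have hev := ((hF₁ φ hφ).mono hRΩ).eventually_ne hv hφ0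
    have hne : ∀ᶠ w in 𝓝[≠] (0:ℂ), φ (w, 0) ≠ 0 := by
      have ht : Tendsto (fun w : ℂ => w / ((R/2 : ℝ) : ℂ)) (𝓝[≠] 0) (𝓝[≠] 0) := by
        have hR2 : ((R/2 : ℝ) : ℂ) ≠ 0 := by
          rw [Complex.ofReal_ne_zero]; positivity
        refine tendsto_nhdsWithin_iff.2 ⟨?_, ?_⟩
        · have : Tendsto (fun w : ℂ => w / ((R/2 : ℝ) : ℂ)) (𝓝 0) (𝓝 (0 / ((R/2 : ℝ) : ℂ))) :=
            (continuous_id.div_const _).tendsto 0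
          rw [zero_div] at this
          exact this.mono_left nhdsWithin_le_nhds
        · filter_upwards [self_mem_nhdsWithin] with w hw
          exact div_ne_zero hw hR2
      filter_upwards [ht.eventually hev] with w hw
      have hR2 : ((R/2 : ℝ) : ℂ) ≠ 0 := by
        rw [Complex.ofReal_ne_zero]; positivity
      rwa [Prod.smul_mk, smul_eq_mul, div_mul_cancel₀ _ hR2, Prod.smul_mk, smul_zero, smul_zero] at hw
    obtain ⟨ρ, hρ, δ, hδ, hsub, hpun, G, hG, hGz, hfin⟩ := elim hΩ₁ h0₁ hF₁ hφ hne
    obtain ⟨W, hW, W', hW', hWW, hWfin⟩ := ih P (ball 0 δ) isOpen_ball (mem_ball_self hδ) G hG (by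
      intro z hz hGz0
      obtain ⟨w, hw, hw0⟩ := (hGz _ hz).1 hGz0
      have := hiso (Fin.cons w z) (hsub (mk_mem_prod hw hz)) (fun φ hφ => by
        have := hw0 _ ⟨φ, hφ, rfl⟩
        simpa only [hL] using this)
      ext i
      simpa using congrFun this i.succ)
    refine ⟨{z | z 0 ∈ ball (0:ℂ) ρ ∧ (fun i : Fin N => z i.succ) ∈ W}, ?_, W', hW', ?_, ?_⟩
    · refine inter_mem ?_ ?_
      · have hc : Continuous (fun z : Fin (N+1) → ℂ => z 0) := by fun_prop
        have hb : ball (0:ℂ) ρ ∈ 𝓝 ((fun z : Fin (N+1) → ℂ => z 0) 0) := ball_mem_nhds (0:ℂ) hρ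
        exact hc.continuousAt.preimage_mem_nhds hb
      · have hc : Continuous (fun z : Fin (N+1) → ℂ => fun i : Fin N => z i.succ) := by fun_prop
        have hb : W ∈ 𝓝 ((fun z : Fin (N+1) → ℂ => fun i : Fin N => z i.succ) 0) := hW
        exact hc.continuousAt.preimage_mem_nhds hb
    · rintro ⟨z, p⟩ ⟨⟨hz1, hz2⟩, hp⟩
      have : (z 0, ((fun i : Fin N => z i.succ), p)) ∈ Ω₁ :=
        hsub ⟨hz1, hWW ⟨hz2, hp⟩⟩
      have h2 : L (z 0, ((fun i : Fin N => z i.succ), p)) = (z, p) := by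
        rw [hL]; congr 1; exact Fin.cons_self_tail z
      simpa [Ω₁, h2] using this
    · intro p hp
      have hbig : (⋃ z' ∈ {z ∈ W | ∀ g ∈ G, g (z, p) = 0},
          (fun w : ℂ => (Fin.cons w z' : Fin (N+1) → ℂ)) ''
            {w ∈ ball (0:ℂ) ρ | ∀ φ ∈ F₁, φ (w, (z', p)) = 0}).Finite := by
        refine (hWfin p hp).biUnion fun z' hz' => ?_
        exact (hfin (z', p) (hWW ⟨hz'.1, hp⟩)).image _
      refine hbig.subset ?_
      rintro z ⟨⟨hz1, hz2⟩, hz⟩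
      have hzc : (Fin.cons (z 0) (fun i : Fin N => z i.succ) : Fin (N+1) → ℂ) = z := Fin.cons_self_tail z
      have hz3 : ∀ φ ∈ F₁, φ (z 0, ((fun i : Fin N => z i.succ), p)) = 0 := by
        rintro _ ⟨φ, hφ, rfl⟩
        simp only [hL, hzc]
        exact hz φ hφ
      simp only [mem_iUnion]
      refine ⟨fun i : Fin N => z i.succ, ⟨hz2, ?_⟩, z 0, ⟨hz1, hz3⟩, hzc⟩
      exact (hGz _ (hWW ⟨hz2, hp⟩)).2 ⟨z 0, hz1, hz3⟩

/-- Noether type projection -/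
lemma noether_proj (n : ℕ) : ∀ (E : Type) [NormedAddCommGroup E] [NormedSpace ℂ E]
    [FiniteDimensional ℂ E], Module.finrank ℂ E = n →
    ∀ (Ω : Set E), IsOpen Ω → (0 : E) ∈ Ω →
    ∀ F : Set (E → ℂ), (∀ φ ∈ F, Hol Ω φ) → (∀ φ ∈ F, φ 0 = 0) →
    ∃ (s : ℕ) (π : E →L[ℂ] (Fin s → ℂ)), Function.Surjective π ∧
      (∃ Ω' ∈ 𝓝 (0:E), ∀ x ∈ Ω', π x = 0 → (∀ φ ∈ F, φ x = 0) → x = 0) ∧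
      π '' {x ∈ Ω | ∀ φ ∈ F, φ x = 0} ∈ 𝓝 0 := by
  induction n with
  | zero =>
    intro E _ _ _ hn Ω hΩ h0 F hF hF0
    have : Subsingleton E := Module.finrank_zero_iff.1 hn
    refine ⟨0, 0, fun x => ⟨0, Subsingleton.elim _ _⟩, ⟨univ, univ_mem, fun x _ _ _ => Subsingleton.elim _ _⟩, ?_⟩
    have : (0 : E →L[ℂ] (Fin 0 → ℂ)) '' {x ∈ Ω | ∀ φ ∈ F, φ x = 0} = univ := by
      rw [eq_univ_iff_forall]
      exact fun x => ⟨0, ⟨h0, hF0⟩, Subsingleton.elim _ _⟩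
    rw [this]; exact univ_mem
  | succ n ih =>
    intro E _ _ _ hn Ω hΩ h0 F hF hF0
    obtain ⟨R, hR, hRΩ⟩ := Metric.isOpen_iff.1 hΩ 0 h0
    by_cases hall : ∀ x ∈ ball (0:E) R, ∀ φ ∈ F, φ x = 0
    · let e : E ≃L[ℂ] (Fin (n+1) → ℂ) := ContinuousLinearEquiv.ofFinrankEq (by simp [hn])
      refine ⟨n+1, e, e.surjective, ⟨univ, univ_mem, fun x _ hx _ => by simpa using hx⟩, ?_⟩
      have h1 : e '' ball (0:E) R ∈ 𝓝 (0 : Fin (n+1) → ℂ) := by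
        have := e.toHomeomorph.isOpenMap.image_mem_nhds (ball_mem_nhds (0:E) hR)
        simpa using this
      refine mem_of_superset h1 ?_
      rintro _ ⟨x, hx, rfl⟩
      exact ⟨x, ⟨hRΩ hx, hall x hx⟩, rfl⟩
    · push Not at hall
      obtain ⟨v, hv, φ, hφ, hφv⟩ := hall
      have hv0 : v ≠ 0 := by rintro rfl; exact hφv (hF0 φ hφ)
      obtain ⟨ℓ, hℓ⟩ : ∃ ℓ : E →L[ℂ] ℂ, ℓ v = 1 := by
        obtain ⟨ℓ, hℓ⟩ := SeparatingDual.exists_eq_one (R := ℂ) hv0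
        exact ⟨ℓ, hℓ⟩
      let e : E ≃L[ℂ] ℂ × ℓ.ker := ContinuousLinearEquiv.equivOfRightInverse ℓ
        (ContinuousLinearMap.toSpanSingleton ℂ v) (fun t => by simp [hℓ])
      have hes : ∀ w y, e.symm (w, y) = w • v + (y : E) := fun w y => rfl
      have hker : Module.finrank ℂ ℓ.ker = n := by
        have h1 := e.toLinearEquiv.finrank_eq
        rw [hn, Module.finrank_prod] at h1
        simp at h1
        omega
      let L : (ℂ × ℓ.ker) →L[ℂ] E := e.symm
      set Ω₁ := L ⁻¹' Ω
      have hΩ₁ : IsOpen Ω₁ := hΩ.preimage L.continuous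
      have h0₁ : (0 : ℂ × ℓ.ker) ∈ Ω₁ := by simpa [Ω₁] using h0
      set F₁ : Set (ℂ × ℓ.ker → ℂ) := (fun φ => fun x => φ (L x)) '' F
      have hF₁ : ∀ φ ∈ F₁, Hol Ω₁ φ := by
        rintro _ ⟨φ, hφ, rfl⟩
        exact (hF φ hφ).comp L
      have hne : ∀ᶠ w in 𝓝[≠] (0:ℂ), (fun x => φ (L x)) (w, (0 : ℓ.ker)) ≠ 0 := by
        filter_upwards [((hF φ hφ).mono hRΩ).eventually_ne hv hφv] with w hw
        simpa [L, hes] using hw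
      obtain ⟨ρ, hρ, δ, hδ, hsub, hpun, G, hG, hGz, -⟩ := elim hΩ₁ h0₁ hF₁ ⟨φ, hφ, rfl⟩ hne
      obtain ⟨s, π, hπ, ⟨Ω', hΩ', hiso⟩, himg⟩ := ih ℓ.ker hker (ball 0 δ) isOpen_ball (mem_ball_self hδ) G hG
        ((hGz 0 (mem_ball_self hδ)).2 ⟨0, mem_ball_self hρ, by
          rintro _ ⟨ψ, hψ, rfl⟩
          have : L (0, 0) = 0 := L.map_zero
          simpa [this] using hF0 ψ hψ⟩)
      have hLe : ∀ x, L (e x) = x := fun x => e.symm_apply_apply x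
      refine ⟨s, π.comp ((ContinuousLinearMap.snd ℂ ℂ ℓ.ker).comp (e : E →L[ℂ] ℂ × ℓ.ker)), ?_, ?_, ?_⟩
      · intro y
        obtain ⟨x, hx⟩ := hπ y
        exact ⟨e.symm (0, x), by simp [hx]⟩
      · refine ⟨e ⁻¹' (ball 0 ρ ×ˢ (Ω' ∩ ball 0 δ)), ?_, ?_⟩
        · refine e.continuous.continuousAt.preimage_mem_nhds ?_
          rw [e.map_zero]
          exact prod_mem_nhds (ball_mem_nhds _ hρ) (inter_mem hΩ' (ball_mem_nhds _ hδ))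
        · rintro x ⟨hx1, hx2, hx3⟩ hπx hFx
          have hF1x : ∀ ψ ∈ F₁, ψ ((e x).1, (e x).2) = 0 := by
            rintro _ ⟨ψ, hψ, rfl⟩
            simpa [hLe] using hFx ψ hψ
          have hy0 : (e x).2 = 0 := hiso _ hx2 (by simpa using hπx)
            ((hGz _ hx3).2 ⟨(e x).1, hx1, hF1x⟩)
          have hw0 : (e x).1 = 0 := by
            by_contra hne0
            refine hpun _ hx1 hne0 ?_
            have := hF1x _ ⟨φ, hφ, rfl⟩
            rwa [hy0] at this
          have : e x = 0 := Prod.ext hw0 hy0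
          simpa using this
      · refine mem_of_superset himg ?_
        rintro _ ⟨y, ⟨hy, hyG⟩, rfl⟩
        obtain ⟨w, hw, hw0⟩ := (hGz y hy).1 hyG
        refine ⟨L (w, y), ⟨hsub ⟨hw, hy⟩, fun ψ hψ => hw0 _ ⟨ψ, hψ, rfl⟩⟩, ?_⟩
        have : e (L (w, y)) = (w, y) := e.apply_symm_apply _
        simp [this]


lemma infinite_fibre (d : ℕ) : ∀ (E : Type) [NormedAddCommGroup E] [NormedSpace ℂ E]
    [FiniteDimensional ℂ E], d < Module.finrank ℂ E → ∀ (x : E) (Ω : Set E), Ω ∈ 𝓝 x →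
    ∀ h : E → (Fin d → ℂ), ContDiffAt ℂ 1 h x → ∃ c, {z ∈ Ω | h z = c}.Infinite := by
  induction d with
  | zero =>
    intro E _ _ _ hd x Ω hΩ h hh
    refine ⟨0, ?_⟩
    have : Nontrivial E := Module.finrank_pos_iff.1 hd
    have h1 : {z ∈ Ω | h z = 0} = Ω := by
      ext z; simp [Subsingleton.elim (h z) 0]
    rw [h1]
    have : NeBot (𝓝[≠] x) := Module.punctured_nhds_neBot ℂ E x
    exact infinite_of_mem_nhds x hΩ
  | succ d ih =>
    intro E _ _ _ hd x Ω hΩ h hh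
    have : CompleteSpace E := FiniteDimensional.complete ℂ E
    obtain ⟨R, hR, hB⟩ := Metric.mem_nhds_iff.1
      (inter_mem hΩ (hh.eventually (by simp)))
    have htail : ∀ z, ContDiffAt ℂ 1 h z → ContDiffAt ℂ 1 (fun z => fun i : Fin d => h z i.succ) z :=
      fun z hz => contDiffAt_pi.2 fun i => contDiffAt_pi.1 hz i.succ
    by_cases hall : ∀ z ∈ ball x R, fderiv ℂ (fun z => h z 0) z = 0
    · obtain ⟨c, hc⟩ := ih E (by omega) x (ball x R) (ball_mem_nhds _ hR) _ (htail x hh)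
      refine ⟨Fin.cons (h x 0) c, hc.mono ?_⟩
      rintro z ⟨hz, hzc⟩
      refine ⟨(hB hz).1, ?_⟩
      have h0 : h z 0 = h x 0 := by
        refine isOpen_ball.is_const_of_fderiv_eq_zero (𝕜 := ℂ) (f := fun z => h z 0) (isPreconnected_ball)
          (fun y hy => ?_) (fun y hy => hall y hy) hz (mem_ball_self hR)
        have hy2 : ContDiffAt ℂ 1 h y := (hB hy).2
        exact ((contDiffAt_pi.1 hy2 0).differentiableAt (by simp)).differentiableWithinAt
      ext i
      refine Fin.cases ?_ (fun i => ?_) i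
      · simpa using h0
      · simpa using congrFun hzc i
    · push Not at hall
      obtain ⟨z, hz, hL⟩ := hall
      have hhz : ContDiffAt ℂ 1 h z := (hB hz).2
      have hg : ContDiffAt ℂ 1 (fun z => h z 0) z := contDiffAt_pi.1 hhz 0
      set L := fderiv ℂ (fun z => h z 0) z with hLdef
      obtain ⟨v, hv⟩ : ∃ v, L v = 1 := by
        obtain ⟨v, hv⟩ : ∃ v, L v ≠ 0 := by
          by_contra hno; push Not at hno; exact hL (ContinuousLinearMap.ext hno)
        exact ⟨(L v)⁻¹ • v, by simp [hv]⟩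
      let e : E ≃L[ℂ] ℂ × L.ker := ContinuousLinearEquiv.equivOfRightInverse L
        (ContinuousLinearMap.toSpanSingleton ℂ v) (fun t => by simp [hv])
      have hker : d < Module.finrank ℂ L.ker := by
        have h1 := e.toLinearEquiv.finrank_eq
        rw [Module.finrank_prod] at h1
        simp at h1
        omega
      let pr : E →L[ℂ] L.ker := (ContinuousLinearMap.snd ℂ ℂ L.ker).comp (e : E →L[ℂ] ℂ × L.ker)
      let Φ : E → ℂ × L.ker := fun y => (h y 0, pr y)
      have hΦ : ContDiffAt ℂ 1 Φ z := hg.prodMk pr.contDiff.contDiffAt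
      have hΦ' : HasFDerivAt Φ (e : E →L[ℂ] ℂ × L.ker) z := by
        have h1 : HasFDerivAt (fun z => h z 0) L z := (hg.differentiableAt (by simp)).hasFDerivAt
        have h2 := h1.prodMk pr.hasFDerivAt
        have h3 : (e : E →L[ℂ] ℂ × L.ker) = L.prod pr := by
          ext y <;> rfl
        rw [h3]; exact h2
      let Q := hΦ.toOpenPartialHomeomorph Φ hΦ' (by simp)
      have hQ : ∀ y, Q y = Φ y := fun y => rfl
      have hzs : z ∈ Q.source := hΦ.mem_toOpenPartialHomeomorph_source hΦ' (by simp)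
      have hΨ : ContDiffAt ℂ 1 Q.symm (Φ z) := hΦ.to_localInverse hΦ' (by simp)
      have hΨz : Q.symm (Φ z) = z := Q.left_inv hzs
      have htgt : Φ z ∈ Q.target := Q.map_source hzs
      let ι : L.ker → ℂ × L.ker := fun y => (h z 0, y)
      have hι : ContDiff ℂ 1 ι := contDiff_const.prodMk contDiff_id
      have hιz : ι (pr z) = Φ z := rfl
      have hk : ContDiffAt ℂ 1 (fun y => Q.symm (ι y)) (pr z) :=
        ContDiffAt.comp (pr z) (by rw [hιz]; exact hΨ) hι.contDiffAt
      have hk2 : ContDiffAt ℂ 1 (fun y => fun i : Fin d => h (Q.symm (ι y)) i.succ) (pr z) :=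
        ContDiffAt.comp (g := (fun z => fun i : Fin d => h z i.succ)) (pr z)
          (by rw [hιz, hΨz]; exact htail z hhz) hk
      have hΩz : Ω ∈ 𝓝 z := mem_of_superset (isOpen_ball.mem_nhds hz) fun y hy => (hB hy).1
      obtain ⟨c, hc⟩ := ih L.ker hker (pr z) {y | ι y ∈ Q.target ∧ Q.symm (ι y) ∈ Ω} (inter_mem
        (hι.continuous.continuousAt.preimage_mem_nhds (Q.open_target.mem_nhds htgt))
        (hk.continuousAt.preimage_mem_nhds (by rw [hιz, hΨz]; exact hΩz))) _ hk2
      refine ⟨Fin.cons (h z 0) c, ((infinite_image_iff (f := fun y => Q.symm (ι y)) ?_).2 hc).mono ?_⟩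
      · rintro y ⟨⟨hy, -⟩, -⟩ y' ⟨⟨hy', -⟩, -⟩ hyy
        have := Q.symm.injOn hy hy' hyy
        exact (Prod.ext_iff.1 this).2
      · rintro _ ⟨y, ⟨⟨hy, hyΩ⟩, hyc⟩, rfl⟩
        refine ⟨hyΩ, ?_⟩
        have h3 : Φ (Q.symm (ι y)) = ι y := Q.right_inv hy
        ext i
        refine Fin.cases ?_ (fun i => ?_) i
        · simpa using (Prod.ext_iff.1 h3).1
        · simpa using congrFun hyc i


lemma degen_iff {r m : ℕ} (M : Matrix (Fin r) (Fin m) ℂ) :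
    ¬ Function.Surjective M.mulVecLin ↔ ∀ B : Matrix (Fin m) (Fin r) ℂ, (M * B).det = 0 := by
  constructor
  · intro h B
    by_contra hB
    apply h
    have hu : IsUnit (M * B).det := isUnit_iff_ne_zero.2 hB
    intro y
    refine ⟨B.mulVec ((M * B)⁻¹.mulVec y), ?_⟩
    rw [Matrix.mulVecLin_apply, Matrix.mulVec_mulVec, Matrix.mulVec_mulVec,
      Matrix.mul_nonsing_inv _ hu, Matrix.one_mulVec]
  · intro h hs
    obtain ⟨B, hB⟩ := Matrix.mulVec_surjective_iff_exists_right_inverse.1 hs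
    have := h B
    rw [hB, Matrix.det_one] at this
    exact one_ne_zero this

lemma degen_left {r m : ℕ} (M : Matrix (Fin r) (Fin m) ℂ)
    (h : ∀ B : Matrix (Fin m) (Fin r) ℂ, (M * B).det = 0) :
    ∃ x : Fin r → ℂ, x ≠ 0 ∧ Matrix.vecMul x M = 0 := by
  have h1 := (degen_iff M).2 h
  have h2 : LinearMap.range M.mulVecLin < ⊤ := by
    rw [lt_top_iff_ne_top]
    intro h3
    exact h1 (LinearMap.range_eq_top.1 h3)
  obtain ⟨g, hg, hg2⟩ := Submodule.exists_le_ker_of_lt_top _ h2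
  have hgx : ∀ y, g y = dotProduct (fun j => g (Pi.single j 1)) y := by
    intro y
    rw [dotProduct]
    conv_lhs => rw [pi_eq_sum_univ' y, map_sum]
    simp [mul_comm]
  refine ⟨fun j => g (Pi.single j 1), ?_, ?_⟩
  · intro h0
    apply hg
    ext j
    simpa using congrFun h0 j
  · ext i
    have h3 : g (M.mulVecLin (Pi.single i 1)) = 0 := hg2 ⟨_, rfl⟩
    rw [hgx, Matrix.mulVecLin_apply, Matrix.dotProduct_mulVec, dotProduct_single] at h3
    simpa using h3

lemma degen_of_left {r m : ℕ} (M : Matrix (Fin r) (Fin m) ℂ) (x : Fin r → ℂ) (hx : x ≠ 0)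
    (h : Matrix.vecMul x M = 0) (B : Matrix (Fin m) (Fin r) ℂ) : (M * B).det = 0 := by
  rw [← Matrix.exists_vecMul_eq_zero_iff]
  exact ⟨x, hx, by rw [← Matrix.vecMul_vecMul, h, Matrix.zero_vecMul]⟩

lemma differentiableOn_det {E : Type*} [NormedAddCommGroup E] [NormedSpace ℂ E] {r : ℕ} {Ω : Set E}
    (M : E → Matrix (Fin r) (Fin r) ℂ) (h : ∀ i j, DifferentiableOn ℂ (fun z => M z i j) Ω) :
    DifferentiableOn ℂ (fun z => (M z).det) Ω := by
  simp only [Matrix.det_apply']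
  refine DifferentiableOn.fun_sum fun σ _ => DifferentiableOn.const_mul ?_ _
  have hp : ∀ u : Finset (Fin r), DifferentiableOn ℂ (fun z => ∏ i ∈ u, M z (σ i) i) Ω := by
    intro u
    induction u using Finset.induction_on with
    | empty => simpa using differentiableOn_const (1:ℂ)
    | insert a u ha ih =>
      simp only [Finset.prod_insert ha]
      exact (h _ _).mul ih
  exact hp _

lemma differentiableOn_det_mul {E : Type*} [NormedAddCommGroup E] [NormedSpace ℂ E] {r m : ℕ} {Ω : Set E}
    (M : E → Matrix (Fin r) (Fin m) ℂ) (h : ∀ i j, DifferentiableOn ℂ (fun z => M z i j) Ω)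
    (B : Matrix (Fin m) (Fin r) ℂ) :
    DifferentiableOn ℂ (fun z => (M z * B).det) Ω := by
  refine differentiableOn_det _ fun i j => ?_
  simp only [Matrix.mul_apply]
  exact DifferentiableOn.fun_sum fun l _ => (h i l).mul_const _

lemma eventually_det_add {k : ℕ} (M : Matrix (Fin k) (Fin k) ℂ) :
    ∀ᶠ ε in 𝓝[≠] (0:ℂ), (M + ε • (1 : Matrix (Fin k) (Fin k) ℂ)).det ≠ 0 := by
  have hfin : {ε : ℂ | (-M).charpoly.IsRoot ε}.Finite :=
    Polynomial.finite_setOfPred_isRoot (Matrix.charpoly_monic _).ne_zero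
  have h2 : ∀ᶠ ε in 𝓝[≠] (0:ℂ), ε ∉ {ε : ℂ | (-M).charpoly.IsRoot ε} := by
    have := (hfin.sdiff (t := {0})).isClosed.isOpen_compl.mem_nhds (x := (0:ℂ)) (by simp)
    filter_upwards [mem_nhdsWithin_of_mem_nhds this, self_mem_nhdsWithin] with ε h1 h2 h3
    exact h1 ⟨h3, h2⟩
  filter_upwards [h2] with ε hε h0
  apply hε
  show Polynomial.eval ε _ = 0
  rw [Matrix.eval_charpoly, ← h0]
  congr 1
  rw [sub_neg_eq_add, add_comm, Matrix.smul_one_eq_diagonal]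
  rfl

lemma isolated_dim (N k m : ℕ) (hkm : k + 1 ≤ m) (f : (Fin N → ℂ) → Fin (k+1) → Fin m → ℂ)
    (Ω : Set (Fin N → ℂ)) (hΩ : IsOpen Ω) (h0 : 0 ∈ Ω)
    (hf : ∀ j i, ContDiffOn ℂ 1 (fun z => f z j i) Ω)
    (hd0 : ∀ B : Matrix (Fin m) (Fin (k+1)) ℂ, (Matrix.of (f 0) * B).det = 0)
    (hiso : ∀ z ∈ Ω, (∀ B : Matrix (Fin m) (Fin (k+1)) ℂ, (Matrix.of (f z) * B).det = 0) → z = 0) :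
    N + k ≤ m := by
  by_contra hlt
  push Not at hlt
  set F : Set ((Fin N → ℂ) × (Fin (k+1) → Fin m → ℂ) → ℂ) :=
    range (fun B : Matrix (Fin m) (Fin (k+1)) ℂ => fun q => (Matrix.of (f q.1 + q.2) * B).det) with hFdef
  have hΩ1 : IsOpen (Ω ×ˢ (univ : Set (Fin (k+1) → Fin m → ℂ))) := hΩ.prod isOpen_univ
  obtain ⟨W, hW, W', hW', -, hfin⟩ := finite_fibres N (Fin (k+1) → Fin m → ℂ) (Ω ×ˢ univ)
    hΩ1 ⟨h0, mem_univ _⟩ F (by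
      rintro _ ⟨B, rfl⟩
      refine Hol.of_differentiableOn hΩ1 (differentiableOn_det_mul _ (fun j i => ?_) B)
      have h1 : DifferentiableOn ℂ (fun q : (Fin N → ℂ) × (Fin (k+1) → Fin m → ℂ) => f q.1 j i)
          (Ω ×ˢ univ) := ((hf j i).differentiableOn (by simp)).comp differentiableOn_fst (fun q hq => hq.1)
      have h2 : DifferentiableOn ℂ (fun q : (Fin N → ℂ) × (Fin (k+1) → Fin m → ℂ) => q.2 j i)
          (Ω ×ˢ univ) := by fun_prop
      exact h1.add h2) (by
      intro z hz hz0
      refine hiso z hz.1 fun B => ?_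
      simpa using hz0 _ ⟨B, rfl⟩)
  obtain ⟨x₀, hx₀, hx₀f⟩ := degen_left _ hd0
  obtain ⟨j₀, hj₀⟩ : ∃ j, x₀ j ≠ 0 := by
    by_contra hno; push Not at hno; exact hx₀ (funext hno)
  let lam : Fin k → ℂ := fun a => x₀ (j₀.succAbove a) / x₀ j₀
  have hlam : ∀ i, f 0 j₀ i + ∑ a, lam a * f 0 (j₀.succAbove a) i = 0 := by
    intro i
    have h1 := congrFun hx₀f i
    simp only [Matrix.vecMul, dotProduct, Matrix.of_apply, Pi.zero_apply] at h1
    rw [Fin.sum_univ_succAbove _ j₀] at h1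
    have h2 : x₀ j₀ * (f 0 j₀ i + ∑ a, lam a * f 0 (j₀.succAbove a) i) = 0 := by
      rw [← h1, mul_add, Finset.mul_sum]
      congr 1
      refine Finset.sum_congr rfl fun a _ => ?_
      simp only [lam]; field_simp
    exact (mul_eq_zero.1 h2).resolve_left hj₀
  let σ : Fin k → Fin m := Fin.castLE (by omega)
  have hσ : Function.Injective σ := Fin.castLE_injective _
  let T' : Fin k → Fin m → ℂ := fun a i => if i = σ a then 1 else 0
  let T : Fin (k+1) → Fin m → ℂ := j₀.insertNth (fun i => - ∑ a, lam a * T' a i) T'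
  have hT0 : T j₀ = (fun i => - ∑ a, lam a * T' a i) := Fin.insertNth_apply_same _ _ _
  have hT1 : ∀ a, T (j₀.succAbove a) = T' a := fun a => Fin.insertNth_apply_succAbove _ _ _ _
  let sub : (Fin (k+1) → Fin m → ℂ) → Matrix (Fin k) (Fin k) ℂ :=
    fun A => Matrix.of fun a b => A (j₀.succAbove a) (σ b)
  have hsubc : Continuous fun A => (sub A).det := by
    refine Continuous.matrix_det ?_
    refine continuous_matrix fun a b => ?_
    simp only [sub, Matrix.of_apply]
    fun_prop
  obtain ⟨ε, hε1, hε2⟩ : ∃ ε : ℂ, (sub (f 0) + ε • (1 : Matrix (Fin k) (Fin k) ℂ)).det ≠ 0 ∧ ε • T ∈ interior W' := by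
    have h1 : ∀ᶠ ε in 𝓝 (0:ℂ), ε • T ∈ interior W' := by
      have hc : Continuous fun ε : ℂ => ε • T := by fun_prop
      refine hc.continuousAt.eventually_mem ?_
      rw [zero_smul]
      exact interior_mem_nhds.2 hW'
    exact ((eventually_det_add (sub (f 0))).and (h1.filter_mono nhdsWithin_le_nhds)).exists
  have hsubT : sub (f 0 + ε • T) = sub (f 0) + ε • (1 : Matrix (Fin k) (Fin k) ℂ) := by
    ext a b
    simp only [sub, Matrix.of_apply, Pi.add_apply, Pi.smul_apply, hT1, Matrix.add_apply,
      Matrix.smul_apply, Matrix.one_apply, T', hσ.eq_iff, eq_comm (a := b)]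
  let g : (Fin N → ℂ) → Fin (k+1) → Fin m → ℂ := fun z => f z + ε • T
  have hg : ∀ j i, ContDiffAt ℂ 1 (fun z => g z j i) 0 := by
    intro j i
    have h1 : ContDiffAt ℂ 1 (fun z => f z j i) 0 :=
      (hf j i).contDiffAt (hΩ.mem_nhds h0)
    exact h1.add contDiffAt_const
  have hg0 : ∀ i, g 0 j₀ i + ∑ a, lam a * g 0 (j₀.succAbove a) i = 0 := by
    intro i
    simp only [g, Pi.add_apply, Pi.smul_apply, hT0, hT1, smul_eq_mul, mul_add, Finset.sum_add_distrib]
    have h1 : ∑ a, lam a * (ε * T' a i) = ε * ∑ a, lam a * T' a i := by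
      rw [Finset.mul_sum]; exact Finset.sum_congr rfl fun a _ => by ring
    rw [h1]
    linear_combination hlam i
  let h : (Fin N → ℂ) × (Fin k → ℂ) → Fin m → ℂ :=
    fun q i => g q.1 j₀ i + ∑ a, q.2 a * g q.1 (j₀.succAbove a) i
  have hh : ContDiffAt ℂ 1 h (0, lam) := by
    refine contDiffAt_pi.2 fun i => ?_
    have hgg : ∀ j, ContDiffAt ℂ 1 (fun q : (Fin N → ℂ) × (Fin k → ℂ) => g q.1 j i) (0, lam) := fun j =>
      ContDiffAt.comp (g := fun z => g z j i) (0, lam) (hg j i) contDiffAt_fst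
    refine (hgg j₀).add (ContDiffAt.sum fun a _ => ContDiffAt.mul ?_ (hgg _))
    exact contDiffAt_pi.1 contDiffAt_snd a
  have hh0 : h (0, lam) = 0 := funext hg0
  let A : (Fin m → ℂ) → Fin (k+1) → Fin m → ℂ := fun c => ε • T - Pi.single j₀ c
  have hA : Continuous A := by
    refine continuous_const.sub ?_
    exact continuous_single (A := fun _ : Fin (k+1) => Fin m → ℂ) j₀
  have hgc : ContinuousAt g 0 := by
    refine continuousAt_pi.2 fun j => continuousAt_pi.2 fun i => (hg j i).continuousAt
  have hS : {q : (Fin N → ℂ) × (Fin k → ℂ) | (q.1 ∈ W ∧ (sub (g q.1)).det ≠ 0) ∧ A (h q) ∈ W'} ∈ 𝓝 ((0 : Fin N → ℂ), lam) := by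
    have e1 : ∀ᶠ z in 𝓝 (0 : Fin N → ℂ), (sub (g z)).det ≠ 0 := by
      have : ContinuousAt (fun z => (sub (g z)).det) 0 :=
        ContinuousAt.comp (g := fun A => (sub A).det) hsubc.continuousAt hgc
      refine this.eventually_ne ?_
      show (sub (f 0 + ε • T)).det ≠ 0
      rw [hsubT]; exact hε1
    have e2 : ∀ᶠ q in 𝓝 ((0 : Fin N → ℂ), lam), (q.1 ∈ W ∧ (sub (g q.1)).det ≠ 0) := by
      have e4 : ∀ᶠ z in 𝓝 (0 : Fin N → ℂ), z ∈ W ∧ (sub (g z)).det ≠ 0 :=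
        Filter.Eventually.and (p := fun z => z ∈ W) hW e1
      exact (continuousAt_fst (p := ((0 : Fin N → ℂ), lam))).eventually e4
    have e3 : ∀ᶠ q in 𝓝 ((0 : Fin N → ℂ), lam), A (h q) ∈ W' := by
      have : ContinuousAt (fun q => A (h q)) (0, lam) :=
        ContinuousAt.comp (g := A) (f := h) hA.continuousAt hh.continuousAt
      refine this.eventually_mem ?_
      rw [hh0]
      have : A 0 = ε • T := by simp [A]
      rw [this]
      exact mem_interior_iff_mem_nhds.1 hε2
    exact e2.and e3
  obtain ⟨c, hc⟩ := infinite_fibre m ((Fin N → ℂ) × (Fin k → ℂ)) (by simpa using hlt) _ _ hS h hh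
  have hcW : A c ∈ W' := by
    obtain ⟨q, hq, hqc⟩ := hc.nonempty
    rw [← hqc]; exact hq.2
  refine ((infinite_image_iff (f := Prod.fst) ?_).2 hc) ((hfin _ hcW).subset ?_)
  · rintro ⟨z, x⟩ ⟨⟨⟨-, hdet⟩, -⟩, hx⟩ ⟨z', x'⟩ ⟨-, hx'⟩ (rfl : z = z')
    have hxx : x - x' = 0 := by
      by_contra hne
      apply hdet
      rw [← Matrix.exists_vecMul_eq_zero_iff]
      refine ⟨x - x', hne, ?_⟩
      ext b
      have h1 := congrFun (hx.trans hx'.symm) (σ b)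
      simp only [h] at h1
      simp only [Matrix.vecMul, dotProduct, Pi.sub_apply, sub_mul, Finset.sum_sub_distrib, sub,
        Matrix.of_apply, Pi.zero_apply]
      linear_combination h1
    rw [sub_eq_zero.1 hxx]
  · rintro _ ⟨⟨z, x⟩, ⟨⟨⟨hzW, -⟩, -⟩, hx⟩, rfl⟩
    refine ⟨hzW, ?_⟩
    rintro _ ⟨B, rfl⟩
    refine degen_of_left _ (j₀.insertNth (α := fun _ => ℂ) 1 x) ?_ ?_ B
    · intro h1
      have := congrFun h1 j₀
      simp at this
    · ext i
      have h1 := congrFun hx i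
      simp only [h] at h1
      simp only [Matrix.vecMul, dotProduct, Matrix.of_apply, Pi.zero_apply]
      rw [Fin.sum_univ_succAbove _ j₀]
      simp only [Fin.insertNth_apply_same, Fin.insertNth_apply_succAbove, A, Pi.add_apply, Pi.sub_apply,
        Pi.single_eq_same, Pi.single_eq_of_ne (Fin.succAbove_ne j₀ _), Pi.zero_apply, sub_zero]
      simp only [g, Pi.add_apply] at h1
      linear_combination h1


lemma codim_aux (n k m : ℕ) (hrm : k + 1 ≤ m)
    (U : Set (Fin n → ℂ)) (hU : IsOpen U)
    (f : Fin (k+1) → Fin m → (Fin n → ℂ) → ℂ)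
    (hf : ∀ j i, AnalyticOnNhd ℂ (f j i) U)
    (Z : Set (Fin n → ℂ))
    (hZ : Z = {z ∈ U | ¬ Function.Surjective (Matrix.mulVecLin (Matrix.of fun j i => f j i z))})
    (z₀ : Fin n → ℂ) (hz₀ : z₀ ∈ Z) (V : Set (Fin n → ℂ)) (hV : V ∈ 𝓝 z₀) :
    ((2 * (n - (m - (k+1) + 1)) : ℕ) : ℝ≥0∞) ≤ dimH (Z ∩ V) := by
  have hZ' : ∀ z, z ∈ Z ↔ z ∈ U ∧ ∀ B : Matrix (Fin m) (Fin (k+1)) ℂ,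
      (Matrix.of (fun j i => f j i z) * B).det = 0 := by
    intro z
    rw [hZ, ← degen_iff]; rfl
  set Ω : Set (Fin n → ℂ) := {z | z₀ + z ∈ U ∩ interior V} with hΩdef
  have hΩ : IsOpen Ω := (hU.inter isOpen_interior).preimage (by fun_prop)
  have h0 : (0 : Fin n → ℂ) ∈ Ω := by
    simp only [Ω, mem_ofPred_eq, add_zero]
    exact ⟨((hZ' z₀).1 hz₀).1, mem_interior_iff_mem_nhds.2 hV⟩
  let g : (Fin n → ℂ) → Fin (k+1) → Fin m → ℂ := fun z j i => f j i (z₀ + z)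
  have hg : ∀ j i, ContDiffOn ℂ 1 (fun z => g z j i) Ω := by
    intro j i z hz
    have h1 : ContDiffAt ℂ 1 (f j i) (z₀ + z) := (hf j i _ hz.1).contDiffAt
    exact (ContDiffAt.comp z h1 (contDiffAt_const.add contDiffAt_id)).contDiffWithinAt
  set F : Set ((Fin n → ℂ) → ℂ) :=
    range (fun B : Matrix (Fin m) (Fin (k+1)) ℂ => fun z => (Matrix.of (g z) * B).det)
  have hFg : ∀ z, (∀ φ ∈ F, φ z = 0) ↔ ∀ B : Matrix (Fin m) (Fin (k+1)) ℂ, (Matrix.of (g z) * B).det = 0 := by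
    intro z; simp [F]
  have hg0 : ∀ B : Matrix (Fin m) (Fin (k+1)) ℂ, (Matrix.of (g 0) * B).det = 0 := by
    have := ((hZ' z₀).1 hz₀).2
    simpa [g] using this
  obtain ⟨s, π, hπ, ⟨Ω', hΩ', hiso⟩, himg⟩ := noether_proj n (Fin n → ℂ) (by simp) Ω hΩ h0 F (by
      rintro _ ⟨B, rfl⟩
      exact Hol.of_differentiableOn hΩ (differentiableOn_det_mul _
        (fun j i => (hg j i).differentiableOn (by simp)) B)) ((hFg 0).2 hg0)
  have hdim : s + Module.finrank ℂ π.ker = n := by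
    have h1 := LinearMap.finrank_range_add_finrank_ker (π : (Fin n → ℂ) →ₗ[ℂ] (Fin s → ℂ))
    rw [LinearMap.range_eq_top.2 hπ] at h1
    simpa using h1
  let e : (Fin (Module.finrank ℂ π.ker) → ℂ) ≃L[ℂ] π.ker := ContinuousLinearEquiv.ofFinrankEq (by simp)
  let ι : (Fin (Module.finrank ℂ π.ker) → ℂ) →L[ℂ] (Fin n → ℂ) :=
    π.ker.subtypeL.comp (e : _ →L[ℂ] π.ker)
  have hι0 : ∀ z, ι z = 0 → z = 0 := by
    intro z hz
    have : e z = 0 := Subtype.ext hz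
    simpa using this
  have hπι : ∀ z, π (ι z) = 0 := fun z => (e z).2
  have key := isolated_dim (Module.finrank ℂ π.ker) k m hrm (fun z => g (ι z)) (ι ⁻¹' (Ω ∩ interior Ω'))
    ((hΩ.inter isOpen_interior).preimage ι.continuous)
    (by rw [mem_preimage, map_zero]; exact ⟨h0, mem_interior_iff_mem_nhds.2 hΩ'⟩)
    (fun j i => (hg j i).comp ι.contDiff.contDiffOn (fun z hz => hz.1))
    (by simpa using hg0)
    (fun z hz hB => hι0 z (hiso _ (interior_subset hz.2) (hπι z) ((hFg _).2 hB)))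
  have hle : n - (m - (k+1) + 1) ≤ s := by omega
  have hdimH : dimH (π '' {x ∈ Ω | ∀ φ ∈ F, φ x = 0}) = ((2 * s : ℕ) : ℝ≥0∞) := by
    rw [Real.dimH_of_mem_nhds himg]
    congr 1
    rw [Module.finrank_pi_fintype]
    simp [mul_comm]
  have hlip : LipschitzWith ‖π‖₊ (fun x => π (x - z₀)) := by
    refine LipschitzWith.of_dist_le_mul fun x y => ?_
    rw [dist_eq_norm, dist_eq_norm, ← map_sub, sub_sub_sub_cancel_right]
    exact π.le_opNorm _
  calc ((2 * (n - (m - (k+1) + 1)) : ℕ) : ℝ≥0∞) ≤ ((2 * s : ℕ) : ℝ≥0∞) := by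
        exact_mod_cast Nat.mul_le_mul_left 2 hle
    _ = dimH (π '' {x ∈ Ω | ∀ φ ∈ F, φ x = 0}) := hdimH.symm
    _ ≤ dimH ((fun x => π (x - z₀)) '' (Z ∩ V)) := by
        refine dimH_mono ?_
        rintro _ ⟨x, ⟨hx, hxF⟩, rfl⟩
        refine ⟨z₀ + x, ⟨(hZ' _).2 ⟨hx.1, (hFg x).1 hxF⟩, interior_subset hx.2⟩, ?_⟩
        simp
    _ ≤ dimH (Z ∩ V) := hlip.dimH_image_le _



end DegAux

open Filter Complex
open scoped ENNReal

attribute [local instance] Classical.propDecidable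

/-- The degeneracy set `Z` of an `r × m` matrix (`1 ≤ r ≤ m`) of holomorphic functions
on an open set `U ⊆ ℂⁿ` — the set where the matrix is not surjective, equivalently the
common zero set of all `r × r` minors — has codimension at most `m − r + 1`:
at every point `z₀ ∈ Z` and for every neighborhood `V` of `z₀`, the Hausdorff dimension
of `Z ∩ V` is at least `2(n − (m − r + 1))`. -/
theorem codim_degeneracy_le (n r m : ℕ) (hrm : r ≤ m) (hr : 1 ≤ r)
    (U : Set (Fin n → ℂ)) (hU : IsOpen U)
    (f : Fin r → Fin m → (Fin n → ℂ) → ℂ)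
    (hf : ∀ j i, AnalyticOnNhd ℂ (f j i) U)
    (Z : Set (Fin n → ℂ))
    (hZ : Z = {z ∈ U | ¬ Function.Surjective (Matrix.mulVecLin (Matrix.of fun j i => f j i z))})
    (hZproper : Z ≠ U)
    (z₀ : Fin n → ℂ) (hz₀ : z₀ ∈ Z) :
    ∀ V ∈ nhds z₀, ((2 * (n - (m - r + 1)) : ℕ) : ℝ≥0∞) ≤ dimH (Z ∩ V) := by
  obtain ⟨k, rfl⟩ : ∃ k, r = k + 1 := ⟨r - 1, by omega⟩
  intro V hV
  exact DegAux.codim_aux n k m hrm U hU f hf Z hZ z₀ hz₀ V hV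
end

section
/- With the complex above and σ_j ∈ E the dual sections with f_k(σ_j) = δ_{jk} (defined off Z), set σ = Σ_j σ_j ⊗ ε_j* and uₖ = σ₁∧⋯∧σ_r∧(∂̄σ)^{⊗(k−1)} ⊗ ε* (a (0,k−1)-form with values in Λ^{r+k−1}E⊗S^{k−1}Q*⊗det Q*). Then on X∖Z: δ_F u₁ = 1 and δ_f u_{k+1} = ∂̄uₖ for all k ≥ 1. -/
open Complex

noncomputable section

/-! A concrete coordinate model for forms with values in
`Λ^{r+k-1}E ⊗ S^{k-1}Q* ⊗ det Q*` on an open subset of `ℂⁿ`.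

Following the paper, `(0,q)`-forms with values in `Λ E` are regarded as sections of
`Λ (E ⊕ T*₀₁)`: we use the exterior algebra of `(Fin m → ℂ) × (Fin n → ℂ)`, the first
factor being the fiber of `E` and the second carrying the antiholomorphic differentials
`dζ̄_t`.  The symmetric factor `S^{k-1}Q*` is recorded in coordinates by monomial
multidegrees `α : Fin r → ℕ`. -/

/-- The model space `Λ (E ⊕ T*₀₁)` over `E = ℂᵐ`, with `n` antiholomorphic
differentials. -/
abbrev EA (m n : ℕ) := ExteriorAlgebra ℂ ((Fin m → ℂ) × (Fin n → ℂ))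

/-- The basis vector `e_i` of `E`. -/
def eVec (m n : ℕ) (i : Fin m) : (Fin m → ℂ) × (Fin n → ℂ) := (Pi.single i 1, 0)

/-- The antiholomorphic differential `dζ̄_t`. -/
def xiVec (m n : ℕ) (t : Fin n) : (Fin m → ℂ) × (Fin n → ℂ) := (0, Pi.single t 1)

/-- The covector on `E ⊕ T*₀₁` given by a tuple `g` on the `E` factor. -/
def dualE (m n : ℕ) (g : Fin m → ℂ) : Module.Dual ℂ ((Fin m → ℂ) × (Fin n → ℂ)) :=
  ∑ i, g i • ((LinearMap.proj i).comp (LinearMap.fst ℂ (Fin m → ℂ) (Fin n → ℂ)))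

/-- Interior multiplication `δ_g` by a covector `g ∈ E*`. -/
def contrE (m n : ℕ) (g : Fin m → ℂ) : EA m n →ₗ[ℂ] EA m n :=
  CliffordAlgebra.contractLeft
    (Q := (0 : QuadraticForm ℂ ((Fin m → ℂ) × (Fin n → ℂ)))) (dualE m n g)

/-- The `t`-th antiholomorphic derivative `∂g/∂ζ̄_t` of a scalar function on `ℂⁿ`. -/
def dbarDir (n : ℕ) (t : Fin n) (g : (Fin n → ℂ) → ℂ) (z : Fin n → ℂ) : ℂ :=
  (fderiv ℝ g z (Pi.single t 1) + I * fderiv ℝ g z (Pi.single t I)) / 2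

variable (n m r : ℕ) (f : Fin r → Fin m → (Fin n → ℂ) → ℂ)

/-- The matrix `f f*`. -/
def gram (z : Fin n → ℂ) : Matrix (Fin r) (Fin r) ℂ :=
  Matrix.of fun k l => ∑ i, f k i z * (starRingEnd ℂ) (f l i z)

/-- The entries of the minimal right inverse `σ = f*(f f*)⁻¹` of `f`;
`σ j` is the section of `E` with minimal norm such that `f_k (σ_j) = δ_{jk}`. -/
def minimalSigma (j : Fin r) (i : Fin m) (z : Fin n → ℂ) : ℂ :=
  ∑ l, (starRingEnd ℂ) (f l i z) * ((gram n m r f z)⁻¹ l j)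

/-- `σ_j` as an element of the model exterior algebra. -/
def sigmaEl (j : Fin r) (z : Fin n → ℂ) : EA m n :=
  ∑ i, minimalSigma n m r f j i z • ExteriorAlgebra.ι ℂ (eVec m n i)

/-- `∂̄σ_j = ∑_{t,i} (∂σ_j^i/∂ζ̄_t) dζ̄_t ∧ e_i` as an element of the model algebra. -/
def dbarSigmaEl (j : Fin r) (z : Fin n → ℂ) : EA m n :=
  ∑ t, ∑ i, dbarDir n t (minimalSigma n m r f j i) z •
    (ExteriorAlgebra.ι ℂ (xiVec m n t) * ExteriorAlgebra.ι ℂ (eVec m n i))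

/-- The form `u_k = σ₁ ∧ ⋯ ∧ σ_r ∧ (∂̄σ)^{⊗(k−1)} ⊗ ε*`, a `(0,k−1)`-form with values
in `Λ^{r+k-1}E ⊗ S^{k-1}Q* ⊗ det Q*`; its component of multidegree `α` (`|α| = k−1`) is
`σ₁ ∧ ⋯ ∧ σ_r ∧ (∂̄σ₁)^{α₁} ∧ ⋯ ∧ (∂̄σ_r)^{α_r}`. -/
def uForm (k : ℕ) (z : Fin n → ℂ) (α : Fin r → ℕ) : EA m n :=
  if (∑ j, α j) + 1 = k then
    (List.ofFn fun j : Fin r => sigmaEl n m r f j z).prod *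
      (List.ofFn fun j : Fin r => (dbarSigmaEl n m r f j z) ^ (α j)).prod
  else 0

/-- The differential `δ_f = ∑_j δ_{f_j} ⊗ δ_{ε_j}` acting on multidegree-indexed
families. -/
def deltaLow (z : Fin n → ℂ) (V : (Fin r → ℕ) → EA m n) : (Fin r → ℕ) → EA m n :=
  fun α => ∑ j, contrE m n (fun i => f j i z) (V (α + Pi.single j 1))

/-- The augmentation `δ_F = δ_{f_r} ⋯ δ_{f_1} ⊗ δ_{ε_1} ⋯ δ_{ε_r}`. -/
def deltaTop (z : Fin n → ℂ) (V : (Fin r → ℕ) → EA m n) : EA m n :=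
  (List.ofFn fun j : Fin r => contrE m n (fun i => f j i z)).foldl (fun a L => L a) (V 0)

/-- `v` is the `∂̄` of the family `u` on the set `S`: for each multidegree `α` there is
a family of coefficients `w t` such that `v = ∑_t dζ̄_t ∧ w t` on `S` and, tested
against every linear functional, `w t` is the `t`-th antiholomorphic derivative of
`u`. -/
def IsDbarFamOn (S : Set (Fin n → ℂ))
    (u v : (Fin n → ℂ) → (Fin r → ℕ) → EA m n) : Prop :=
  ∀ α : Fin r → ℕ, ∃ w : Fin n → (Fin n → ℂ) → EA m n,
    (∀ z ∈ S, v z α = ∑ t, ExteriorAlgebra.ι ℂ (xiVec m n t) * w t z) ∧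
    ∀ (t : Fin n) (ℓ : EA m n →ₗ[ℂ] ℂ), ∀ z ∈ S,
      ℓ (w t z) = dbarDir n t (fun y => ℓ (u y α)) z


/-! ### Algebra in the exterior algebra -/

section algebraPart

variable {V : Type*} [AddCommGroup V] [Module ℂ V]

/-- The grading involution. -/
def invo : ExteriorAlgebra ℂ V →ₐ[ℂ] ExteriorAlgebra ℂ V :=
  CliffordAlgebra.involute (Q := (0 : QuadraticForm ℂ V))

lemma invo_iota (v : V) : invo (ExteriorAlgebra.ι ℂ v) = - ExteriorAlgebra.ι ℂ v :=
  CliffordAlgebra.involute_ι (Q := (0 : QuadraticForm ℂ V)) v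

lemma iota_mul_eq (v : V) (x : ExteriorAlgebra ℂ V) :
    ExteriorAlgebra.ι ℂ v * x = invo x * ExteriorAlgebra.ι ℂ v := by
  induction x using CliffordAlgebra.left_induction with
  | algebraMap c =>
    rw [AlgHom.commutes, Algebra.commutes]
  | add x y hx hy => rw [mul_add, hx, hy, map_add, add_mul]
  | ι_mul x w hx =>
    change ExteriorAlgebra.ι ℂ v * (ExteriorAlgebra.ι ℂ w * x)
      = invo (ExteriorAlgebra.ι ℂ w * x) * ExteriorAlgebra.ι ℂ v
    have h : ExteriorAlgebra.ι ℂ v * ExteriorAlgebra.ι ℂ w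
        = - (ExteriorAlgebra.ι ℂ w * ExteriorAlgebra.ι ℂ v) :=
      eq_neg_of_add_eq_zero_left (ExteriorAlgebra.ι_add_mul_swap v w)
    rw [map_mul, invo_iota, ← mul_assoc, h, neg_mul, neg_mul, mul_assoc, hx, neg_mul, mul_assoc]

lemma iota_iota_central (v w : V) (x : ExteriorAlgebra ℂ V) :
    (ExteriorAlgebra.ι ℂ v * ExteriorAlgebra.ι ℂ w) * x
      = x * (ExteriorAlgebra.ι ℂ v * ExteriorAlgebra.ι ℂ w) := by
  have hi : invo (invo x) = x :=
    CliffordAlgebra.involute_involute (Q := (0 : QuadraticForm ℂ V)) x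
  rw [mul_assoc, iota_mul_eq w, ← mul_assoc, iota_mul_eq v, hi, mul_assoc]

lemma contr_mul (d : Module.Dual ℂ V) (x y : ExteriorAlgebra ℂ V) :
    CliffordAlgebra.contractLeft (Q := (0 : QuadraticForm ℂ V)) d (x * y)
      = CliffordAlgebra.contractLeft (Q := (0 : QuadraticForm ℂ V)) d x * y
        + invo x * CliffordAlgebra.contractLeft (Q := (0 : QuadraticForm ℂ V)) d y := by
  induction x using CliffordAlgebra.left_induction with
  | algebraMap c =>
    rw [CliffordAlgebra.contractLeft_algebraMap_mul, CliffordAlgebra.contractLeft_algebraMap,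
      AlgHom.commutes, zero_mul, zero_add]
  | add x x' hx hy =>
    rw [add_mul, map_add, hx, hy, map_add, map_add, add_mul, add_mul]
    abel
  | ι_mul x w hx =>
    have hi : invo (CliffordAlgebra.ι (0 : QuadraticForm ℂ V) w)
      = - CliffordAlgebra.ι (0 : QuadraticForm ℂ V) w := invo_iota w
    rw [mul_assoc, CliffordAlgebra.contractLeft_ι_mul, hx, CliffordAlgebra.contractLeft_ι_mul,
      map_mul, hi]
    simp only [sub_mul, mul_add, smul_mul_assoc, neg_mul, mul_assoc]
    abel

end algebraPart

/-! ### Abstract antiderivation lemmas -/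

lemma dbarSigma_central (j : Fin r) (z : Fin n → ℂ) (x : EA m n) :
    dbarSigmaEl n m r f j z * x = x * dbarSigmaEl n m r f j z := by
  unfold dbarSigmaEl
  simp only [Finset.sum_mul, Finset.mul_sum, smul_mul_assoc, mul_smul_comm, iota_iota_central]

lemma invo_dbarSigma (j : Fin r) (z : Fin n → ℂ) :
    invo (dbarSigmaEl n m r f j z) = dbarSigmaEl n m r f j z := by
  unfold dbarSigmaEl
  simp only [map_sum, map_smul, map_mul, invo_iota, neg_mul_neg]

lemma invo_sigma (j : Fin r) (z : Fin n → ℂ) :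
    invo (sigmaEl n m r f j z) = - sigmaEl n m r f j z := by
  unfold sigmaEl
  simp only [map_sum, map_smul, invo_iota, smul_neg, Finset.sum_neg_distrib]

lemma contrE_mul (g : Fin m → ℂ) (x y : EA m n) :
    contrE m n g (x * y) = contrE m n g x * y + invo x * contrE m n g y :=
  contr_mul _ x y

lemma contrE_one (g : Fin m → ℂ) : contrE m n g 1 = 0 :=
  CliffordAlgebra.contractLeft_one (Q := (0 : QuadraticForm ℂ ((Fin m → ℂ) × (Fin n → ℂ)))) _

lemma dualE_eVec (g : Fin m → ℂ) (i : Fin m) : dualE m n g (eVec m n i) = g i := by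
  simp [dualE, eVec, Pi.single_apply]

lemma dualE_xiVec (g : Fin m → ℂ) (t : Fin n) : dualE m n g (xiVec m n t) = 0 := by
  simp [dualE, xiVec]

lemma contrE_iota (g : Fin m → ℂ) (v : (Fin m → ℂ) × (Fin n → ℂ)) :
    contrE m n g (ExteriorAlgebra.ι ℂ v) = algebraMap ℂ _ (dualE m n g v) :=
  CliffordAlgebra.contractLeft_ι (Q := (0 : QuadraticForm ℂ ((Fin m → ℂ) × (Fin n → ℂ)))) _ _

lemma prod_pow_add_single {A : Type*} [Ring A] {r : ℕ} (b : Fin r → A)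
    (hb : ∀ j x, b j * x = x * b j) (α : Fin r → ℕ) (j : Fin r) :
    (List.ofFn fun i => b i ^ ((α + Pi.single j 1 : Fin r → ℕ) i)).prod
      = b j * (List.ofFn fun i => b i ^ α i).prod := by
  have hc : ∀ i, b i ∈ Subring.center A := fun i =>
    Subring.mem_center_iff.2 fun x => (hb i x).symm
  set c : Fin r → Subring.center A := fun i => ⟨b i, hc i⟩ with hcdef
  have key : ∀ β : Fin r → ℕ, (List.ofFn fun i => b i ^ β i).prod
      = ((∏ i, c i ^ β i : Subring.center A) : A) := by
    intro β
    rw [← List.prod_ofFn]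
    change _ = (Subring.center A).subtype _
    rw [map_list_prod, List.map_ofFn]
    rfl
  rw [key, key]
  have : (∏ i, c i ^ ((α + Pi.single j 1 : Fin r → ℕ) i)) = c j * ∏ i, c i ^ α i := by
    simp only [Pi.add_apply, pow_add, Finset.prod_mul_distrib]
    rw [mul_comm]
    congr 1
    rw [Finset.prod_eq_single j]
    · simp
    · intro i _ hij
      simp [Pi.single_apply, hij]
    · simp
  rw [this]
  rfl

lemma foldl_contr {A : Type*} [Ring A] [Algebra ℂ A] {r : ℕ} (δ : Fin r → A →ₗ[ℂ] A)
    (s : Fin r → A)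
    (h1 : ∀ j, δ j 1 = 0)
    (hmul : ∀ j i x, δ j (s i * x) = (if j = i then 1 else 0) * x - s i * δ j x)
    (l : List (Fin r)) (hl : l.Nodup) :
    (l.map δ).foldl (fun a L => L a) (l.map s).prod = 1 := by
  have h0 : ∀ (l : List (Fin r)) (j : Fin r), j ∉ l → δ j (l.map s).prod = 0 := by
    intro l
    induction l with
    | nil => intro j _; simpa using h1 j
    | cons a l ih =>
      intro j hj
      simp only [List.mem_cons, not_or] at hj
      rw [List.map_cons, List.prod_cons, hmul, if_neg hj.1, ih j hj.2]
      simp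
  induction l with
  | nil => simp
  | cons a l ih =>
    rw [List.nodup_cons] at hl
    rw [List.map_cons, List.map_cons, List.foldl_cons, List.prod_cons, hmul, if_pos rfl,
      h0 l a hl.1, mul_zero, sub_zero, one_mul]
    exact ih hl.2

/-! ### Derivatives -/

/-- `u` is a finite combination of scalar functions, differentiable at `z`, with constant
coefficients, and `u'` is its `t`-th antiholomorphic derivative at `z`. -/
inductive HD (t : Fin n) (z : Fin n → ℂ) : ((Fin n → ℂ) → EA m n) → EA m n → Prop
  | zero : HD t z (fun _ => 0) 0
  | add (u v : (Fin n → ℂ) → EA m n) (u' v' : EA m n) : HD t z u u' → HD t z v v' →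
      HD t z (fun y => u y + v y) (u' + v')
  | smul (g : (Fin n → ℂ) → ℂ) (a : EA m n) : DifferentiableAt ℝ g z →
      HD t z (fun y => g y • a) (dbarDir n t g z • a)

section calculus
variable {n m r}

lemma dbarDir_const (t : Fin n) (z : Fin n → ℂ) (c : ℂ) : dbarDir n t (fun _ => c) z = 0 := by
  simp [dbarDir]

lemma dbarDir_add (t : Fin n) (z : Fin n → ℂ) {g h : (Fin n → ℂ) → ℂ}
    (hg : DifferentiableAt ℝ g z) (hh : DifferentiableAt ℝ h z) :
    dbarDir n t (fun y => g y + h y) z = dbarDir n t g z + dbarDir n t h z := by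
  unfold dbarDir
  rw [fderiv_fun_add hg hh]
  simp only [ContinuousLinearMap.add_apply]
  ring

lemma dbarDir_mul (t : Fin n) (z : Fin n → ℂ) {g h : (Fin n → ℂ) → ℂ}
    (hg : DifferentiableAt ℝ g z) (hh : DifferentiableAt ℝ h z) :
    dbarDir n t (fun y => g y * h y) z = dbarDir n t g z * h z + g z * dbarDir n t h z := by
  unfold dbarDir
  rw [fderiv_fun_mul hg hh]
  simp only [ContinuousLinearMap.add_apply, ContinuousLinearMap.smul_apply, smul_eq_mul]
  ring

lemma dbarDir_sum {ι : Type*} (s : Finset ι) (t : Fin n) (z : Fin n → ℂ)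
    {g : ι → (Fin n → ℂ) → ℂ} (hg : ∀ i ∈ s, DifferentiableAt ℝ (g i) z) :
    dbarDir n t (fun y => ∑ i ∈ s, g i y) z = ∑ i ∈ s, dbarDir n t (g i) z := by
  unfold dbarDir
  rw [fderiv_fun_sum hg]
  simp only [ContinuousLinearMap.sum_apply, Finset.mul_sum, ← Finset.sum_add_distrib,
    Finset.sum_div]

lemma dbarDir_holo (t : Fin n) (z : Fin n → ℂ) {g : (Fin n → ℂ) → ℂ}
    (hg : DifferentiableAt ℂ g z) : dbarDir n t g z = 0 := by
  unfold dbarDir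
  rw [hg.fderiv_restrictScalars ℝ]
  have : (Pi.single t I : Fin n → ℂ) = I • Pi.single t 1 := by
    rw [← Pi.single_smul]; simp
  rw [this]
  simp only [ContinuousLinearMap.coe_restrictScalars', map_smul, smul_eq_mul, ← mul_assoc,
    I_mul_I]
  ring

lemma HD.eval {t : Fin n} {z : Fin n → ℂ} {u : (Fin n → ℂ) → EA m n} {u' : EA m n}
    (h : HD n m t z u u') (ℓ : EA m n →ₗ[ℂ] ℂ) :
    DifferentiableAt ℝ (fun y => ℓ (u y)) z ∧ dbarDir n t (fun y => ℓ (u y)) z = ℓ u' := by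
  induction h with
  | zero => simp [dbarDir_const]
  | add u v u' v' _ _ hu hv =>
    simp only [map_add]
    exact ⟨hu.1.add hv.1, by rw [dbarDir_add t z hu.1 hv.1, hu.2, hv.2]⟩
  | smul g a hg =>
    simp only [map_smul, smul_eq_mul]
    refine ⟨hg.mul_const _, ?_⟩
    rw [dbarDir_mul t z hg (differentiableAt_const _), dbarDir_const, mul_zero, add_zero]

lemma HD.mul {t : Fin n} {z : Fin n → ℂ} {u v : (Fin n → ℂ) → EA m n} {u' v' : EA m n}
    (hu : HD n m t z u u') (hv : HD n m t z v v') :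
    HD n m t z (fun y => u y * v y) (u' * v z + u z * v') := by
  induction hu with
  | zero => simpa using HD.zero
  | add u₁ u₂ u₁' u₂' _ _ h1 h2 =>
    convert HD.add _ _ _ _ h1 h2 using 1
    · funext y; rw [add_mul]
    · rw [add_mul, add_mul]; abel
  | smul g a hg =>
    induction hv with
    | zero => simpa using HD.zero
    | add v₁ v₂ v₁' v₂' _ _ h1 h2 =>
      convert HD.add _ _ _ _ h1 h2 using 1
      · funext y; rw [mul_add]
      · rw [mul_add, mul_add]; abel
    | smul h b hh =>
      convert HD.smul (n := n) (m := m) (t := t) (z := z) (fun y => g y * h y) (a * b)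
        (hg.mul hh) using 1
      · funext y; rw [smul_mul_smul_comm]
      · rw [dbarDir_mul t z hg hh, smul_mul_smul_comm, smul_mul_smul_comm, add_smul]

lemma HD.sum {ι : Type*} (s : Finset ι) {t : Fin n} {z : Fin n → ℂ}
    {u : ι → (Fin n → ℂ) → EA m n} {u' : ι → EA m n}
    (h : ∀ i ∈ s, HD n m t z (u i) (u' i)) :
    HD n m t z (fun y => ∑ i ∈ s, u i y) (∑ i ∈ s, u' i) := by
  classical
  induction s using Finset.induction_on with
  | empty => simpa using HD.zero
  | insert a s ha ih =>
    simp only [Finset.sum_insert ha]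
    exact HD.add _ _ _ _ (h a (Finset.mem_insert_self a s))
      (ih fun i hi => h i (Finset.mem_insert_of_mem hi))

lemma HD.one {t : Fin n} {z : Fin n → ℂ} : HD n m t z (fun _ => 1) 0 := by
  have := HD.smul (n := n) (m := m) (t := t) (z := z) (fun _ => 1) 1 (differentiableAt_const _)
  simpa [dbarDir_const] using this

/-- `D` is the value at `z` of the exterior antiholomorphic derivative of `u`. -/
def HB (z : Fin n → ℂ) (u : (Fin n → ℂ) → EA m n) (D : EA m n) : Prop :=
  ∃ u' : Fin n → EA m n, (∀ t, HD n m t z u (u' t)) ∧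
    D = ∑ t, ExteriorAlgebra.ι ℂ (xiVec m n t) * u' t

lemma HB.mul {z : Fin n → ℂ} {u v : (Fin n → ℂ) → EA m n} {D D' : EA m n}
    (hu : HB z u D) (hv : HB z v D') :
    HB z (fun y => u y * v y) (D * v z + invo (u z) * D') := by
  obtain ⟨u', hu, rfl⟩ := hu
  obtain ⟨v', hv, rfl⟩ := hv
  refine ⟨_, fun t => (hu t).mul (hv t), ?_⟩
  simp only [mul_add, Finset.sum_add_distrib, Finset.sum_mul, Finset.mul_sum]
  congr 1
  · exact Finset.sum_congr rfl fun t _ => by rw [mul_assoc]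
  · exact Finset.sum_congr rfl fun t _ => by rw [← mul_assoc, ← mul_assoc, iota_mul_eq]

lemma HB.one {z : Fin n → ℂ} : HB (m := m) z (fun _ => 1) 0 :=
  ⟨fun _ => 0, fun _ => HD.one, by simp⟩

lemma HB.pow {z : Fin n → ℂ} {u : (Fin n → ℂ) → EA m n} (hu : HB z u 0) (k : ℕ) :
    HB z (fun y => u y ^ k) 0 := by
  induction k with
  | zero => simpa using HB.one
  | succ k ih => simpa [pow_succ] using ih.mul hu

lemma HB.list {ι : Type*} {z : Fin n → ℂ} {u : ι → (Fin n → ℂ) → EA m n}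
    (hu : ∀ i, HB z (u i) 0) (l : List ι) :
    HB z (fun y => (l.map fun i => u i y).prod) 0 := by
  induction l with
  | nil => simpa using HB.one
  | cons a l ih => simpa using (hu a).mul ih

lemma HB.prod_sigma {z : Fin n → ℂ} (s : Fin r → (Fin n → ℂ) → EA m n) (b : Fin r → EA m n)
    (δ : Fin r → EA m n →ₗ[ℂ] EA m n)
    (hs : ∀ j, HB z (s j) (b j))
    (hinv : ∀ j, invo (s j z) = - s j z)
    (hb : ∀ j x, b j * x = x * b j)
    (h1 : ∀ j, δ j 1 = 0)
    (hmul : ∀ j i x, δ j (s i z * x) = (if j = i then 1 else 0) * x - s i z * δ j x)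
    (l : List (Fin r)) :
    HB z (fun y => (l.map fun i => s i y).prod)
      (∑ j, b j * δ j (l.map fun i => s i z).prod) := by
  induction l with
  | nil => simpa [h1] using HB.one
  | cons a l ih =>
    have := (hs a).mul ih
    simp only [List.map_cons, List.prod_cons]
    convert this using 1
    simp only [hmul, hinv, mul_sub, Finset.sum_sub_distrib, neg_mul, Finset.mul_sum]
    rw [sub_eq_add_neg]
    congr 1
    · simp
    · rw [Finset.sum_neg_distrib, neg_inj]
      refine Finset.sum_congr rfl fun j _ => ?_
      rw [← mul_assoc, ← mul_assoc, hb]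

lemma dbarDir_comm (t s : Fin n) (z : Fin n → ℂ) {g : (Fin n → ℂ) → ℂ}
    (hg : ContDiffAt ℝ 2 g z) :
    DifferentiableAt ℝ (dbarDir n s g) z ∧
    dbarDir n t (dbarDir n s g) z = dbarDir n s (dbarDir n t g) z := by
  have hd : DifferentiableAt ℝ (fderiv ℝ g) z :=
    (hg.fderiv_right (m := 1) (by norm_num)).differentiableAt (by norm_num)
  have hv : ∀ v, HasFDerivAt (fun y => fderiv ℝ g y v)
      ((fderiv ℝ (fderiv ℝ g) z).flip v) z := fun v => by
    simpa using hd.hasFDerivAt.clm_apply (hasFDerivAt_const v z)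
  have hD : ∀ s, HasFDerivAt (dbarDir n s g)
      ((2⁻¹ : ℂ) • ((fderiv ℝ (fderiv ℝ g) z).flip (Pi.single s 1)
        + I • (fderiv ℝ (fderiv ℝ g) z).flip (Pi.single s I))) z := fun s => by
    have := ((hv (Pi.single s 1)).add ((hv (Pi.single s I)).const_mul I)).const_mul (2⁻¹ : ℂ)
    refine this.congr_of_eventuallyEq (Filter.Eventually.of_forall fun y => ?_)
    simp [dbarDir, div_eq_inv_mul]
  refine ⟨(hD s).differentiableAt, ?_⟩
  have hsym : IsSymmSndFDerivAt ℝ g z := hg.isSymmSndFDerivAt (by simp)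
  have e : ∀ t s, dbarDir n t (dbarDir n s g) z =
      (fderiv ℝ (dbarDir n s g) z (Pi.single t 1)
        + I * fderiv ℝ (dbarDir n s g) z (Pi.single t I)) / 2 := fun _ _ => rfl
  rw [e, e, (hD s).fderiv, (hD t).fderiv]
  simp only [ContinuousLinearMap.smul_apply, ContinuousLinearMap.add_apply,
    ContinuousLinearMap.flip_apply, smul_eq_mul]
  rw [hsym (Pi.single t 1) (Pi.single s 1), hsym (Pi.single t 1) (Pi.single s I),
    hsym (Pi.single t I) (Pi.single s 1), hsym (Pi.single t I) (Pi.single s I)]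
  ring

lemma contDiffAt_det {k : ℕ} {z : Fin n → ℂ} {M : (Fin n → ℂ) → Matrix (Fin k) (Fin k) ℂ}
    (hM : ∀ i j, ContDiffAt ℝ 2 (fun y => M y i j) z) :
    ContDiffAt ℝ 2 (fun y => (M y).det) z := by
  simp only [Matrix.det_apply']
  refine ContDiffAt.sum fun σ _ => ?_
  exact contDiffAt_const.mul (contDiffAt_prod fun i _ => hM _ _)

end calculus

section local_part
variable {n m r f}

lemma gram_contDiffAt {z : Fin n → ℂ} (hf : ∀ j i, AnalyticAt ℂ (f j i) z) (k l : Fin r) :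
    ContDiffAt ℝ 2 (fun y => gram n m r f y k l) z := by
  unfold gram
  simp only [Matrix.of_apply]
  refine ContDiffAt.sum fun i _ => ?_
  have h : ∀ j i, ContDiffAt ℝ 2 (f j i) z := fun j i =>
    ((hf j i).contDiffAt).restrict_scalars ℝ
  exact (h k i).mul (Complex.conjCLE.contDiff.contDiffAt.comp z (h l i))

lemma minimalSigma_contDiffAt {z : Fin n → ℂ} (hf : ∀ j i, AnalyticAt ℂ (f j i) z)
    (hdet : (gram n m r f z).det ≠ 0) (j : Fin r) (i : Fin m) :
    ContDiffAt ℝ 2 (minimalSigma n m r f j i) z := by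
  unfold minimalSigma
  refine ContDiffAt.sum fun l _ => ?_
  have h : ∀ j i, ContDiffAt ℝ 2 (f j i) z := fun j i =>
    ((hf j i).contDiffAt).restrict_scalars ℝ
  refine (Complex.conjCLE.contDiff.contDiffAt.comp z (h l i)).mul ?_
  simp only [Matrix.inv_def, Matrix.smul_apply, smul_eq_mul, Ring.inverse_eq_inv',
    Matrix.adjugate_apply]
  refine ((contDiffAt_det (gram_contDiffAt hf)).inv hdet).mul (contDiffAt_det fun a b => ?_)
  simp only [Matrix.updateRow_apply]
  by_cases hab : a = j
  · simp only [hab, if_true]; exact contDiffAt_const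
  · simp only [hab, if_false]; exact gram_contDiffAt hf a b

lemma sum_f_sigma {z : Fin n → ℂ} (hdet : (gram n m r f z).det ≠ 0) (k j : Fin r) :
    ∑ i, f k i z * minimalSigma n m r f j i z = if k = j then 1 else 0 := by
  have h : gram n m r f z * (gram n m r f z)⁻¹ = 1 :=
    Matrix.mul_nonsing_inv _ (isUnit_iff_ne_zero.2 hdet)
  have h2 := congrFun (congrFun h k) j
  rw [Matrix.mul_apply, Matrix.one_apply] at h2
  rw [← h2]
  simp only [minimalSigma, gram, Matrix.of_apply, Finset.mul_sum, Finset.sum_mul]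
  rw [Finset.sum_comm]
  simp only [mul_assoc]

lemma sum_f_dbar {z : Fin n → ℂ} (hf : ∀ j i, AnalyticAt ℂ (f j i) z)
    (hdet : (gram n m r f z).det ≠ 0) (k j : Fin r) (t : Fin n) :
    ∑ i, f k i z * dbarDir n t (minimalSigma n m r f j i) z = 0 := by
  have hev : (fun y => ∑ i, f k i y * minimalSigma n m r f j i y) =ᶠ[nhds z]
      fun _ => if k = j then (1 : ℂ) else 0 := by
    have hc := (contDiffAt_det (gram_contDiffAt hf)).continuousAt
    filter_upwards [hc.eventually_ne hdet] with y hy using sum_f_sigma hy k j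
  have h1 : dbarDir n t (fun y => ∑ i, f k i y * minimalSigma n m r f j i y) z = 0 := by
    unfold dbarDir
    rw [hev.fderiv_eq]
    exact dbarDir_const t z _
  have hfd : ∀ i, DifferentiableAt ℝ (f k i) z := fun i =>
    (hf k i).differentiableAt.restrictScalars ℝ
  have hsd : ∀ i, DifferentiableAt ℝ (minimalSigma n m r f j i) z := fun i =>
    (minimalSigma_contDiffAt hf hdet j i).differentiableAt (by norm_num)
  rw [dbarDir_sum _ _ _ fun i _ => (hfd i).fun_mul (hsd i)] at h1
  rw [← h1]
  refine Finset.sum_congr rfl fun i _ => ?_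
  rw [dbarDir_mul t z (hfd i) (hsd i), dbarDir_holo t z (hf k i).differentiableAt, zero_mul,
    zero_add]

lemma contr_sigma {z : Fin n → ℂ} (hdet : (gram n m r f z).det ≠ 0) (k j : Fin r) :
    contrE m n (fun i => f k i z) (sigmaEl n m r f j z) = if k = j then 1 else 0 := by
  unfold sigmaEl
  simp only [map_sum, map_smul, contrE_iota, dualE_eVec]
  have := congrArg (algebraMap ℂ (EA m n)) (sum_f_sigma (f := f) hdet k j)
  rw [map_sum] at this
  simp only [Algebra.smul_def, ← map_mul]
  simp only [mul_comm (minimalSigma n m r f j _ z)]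
  rw [this]
  split_ifs <;> simp

lemma contr_dbarSigma {z : Fin n → ℂ} (hf : ∀ j i, AnalyticAt ℂ (f j i) z)
    (hdet : (gram n m r f z).det ≠ 0) (k j : Fin r) :
    contrE m n (fun i => f k i z) (dbarSigmaEl n m r f j z) = 0 := by
  unfold dbarSigmaEl
  simp only [map_sum, map_smul, contrE_mul, contrE_iota, dualE_eVec, dualE_xiVec, map_zero,
    zero_mul, zero_add, invo_iota]
  refine Finset.sum_eq_zero fun t _ => ?_
  have : ∀ i, dbarDir n t (minimalSigma n m r f j i) z •
      (-ExteriorAlgebra.ι ℂ (xiVec m n t) * algebraMap ℂ (EA m n) (f k i z))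
      = (f k i z * dbarDir n t (minimalSigma n m r f j i) z) •
        (-ExteriorAlgebra.ι ℂ (xiVec m n t)) := by
    intro i
    rw [← Algebra.commutes, ← Algebra.smul_def, smul_smul, mul_comm]
  simp only [this]
  rw [← Finset.sum_smul, sum_f_dbar hf hdet, zero_smul]

lemma HB_sigma {z : Fin n → ℂ} (hf : ∀ j i, AnalyticAt ℂ (f j i) z)
    (hdet : (gram n m r f z).det ≠ 0) (j : Fin r) :
    HB z (sigmaEl n m r f j) (dbarSigmaEl n m r f j z) := by
  have hsd : ∀ i, DifferentiableAt ℝ (minimalSigma n m r f j i) z := fun i =>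
    (minimalSigma_contDiffAt hf hdet j i).differentiableAt (by norm_num)
  refine ⟨fun t => ∑ i, dbarDir n t (minimalSigma n m r f j i) z •
    ExteriorAlgebra.ι ℂ (eVec m n i), fun t => ?_, ?_⟩
  · exact HD.sum _ fun i _ => HD.smul _ _ (hsd i)
  · simp only [dbarSigmaEl, Finset.mul_sum, mul_smul_comm]

lemma HB_dbarSigma {z : Fin n → ℂ} (hf : ∀ j i, AnalyticAt ℂ (f j i) z)
    (hdet : (gram n m r f z).det ≠ 0) (j : Fin r) :
    HB z (dbarSigmaEl n m r f j) 0 := by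
  have hc := fun t s i => dbarDir_comm t s z (minimalSigma_contDiffAt hf hdet j i)
  refine ⟨fun t => ∑ s, ∑ i, dbarDir n t (dbarDir n s (minimalSigma n m r f j i)) z •
    (ExteriorAlgebra.ι ℂ (xiVec m n s) * ExteriorAlgebra.ι ℂ (eVec m n i)), fun t => ?_, ?_⟩
  · exact HD.sum _ fun s _ => HD.sum _ fun i _ => HD.smul _ _ (hc t s i).1
  · simp only [Finset.mul_sum, mul_smul_comm, ← mul_assoc]
    set S : EA m n := ∑ t, ∑ s, ∑ i, dbarDir n t (dbarDir n s (minimalSigma n m r f j i)) z •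
      (ExteriorAlgebra.ι ℂ (xiVec m n t) * ExteriorAlgebra.ι ℂ (xiVec m n s)
        * ExteriorAlgebra.ι ℂ (eVec m n i)) with hS
    have h : S = -S := by
      conv_lhs => rw [hS, Finset.sum_comm]
      rw [hS]
      simp only [← Finset.sum_neg_distrib]
      refine Finset.sum_congr rfl fun t _ => Finset.sum_congr rfl fun s _ =>
        Finset.sum_congr rfl fun i _ => ?_
      have h2 : ExteriorAlgebra.ι ℂ (xiVec m n s) * ExteriorAlgebra.ι ℂ (xiVec m n t)
        = - (ExteriorAlgebra.ι ℂ (xiVec m n t) * ExteriorAlgebra.ι ℂ (xiVec m n s)) :=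
        eq_neg_of_add_eq_zero_left (ExteriorAlgebra.ι_add_mul_swap _ _)
      rw [(hc s t i).2, h2, neg_mul, smul_neg]
    have h3 : (2 : ℂ) • S = 0 := by
      rw [two_smul]
      nth_rewrite 2 [h]
      exact add_neg_cancel S
    exact ((smul_eq_zero.1 h3).resolve_left two_ne_zero).symm

lemma contr_list_zero {z : Fin n → ℂ} {ι : Type*} (g : Fin m → ℂ) (x : ι → EA m n)
    (hx : ∀ i, contrE m n g (x i) = 0) (a : ι → ℕ) (l : List ι) :
    contrE m n g (l.map fun i => x i ^ a i).prod = 0 := by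
  have hp : ∀ i k, contrE m n g (x i ^ k) = 0 := by
    intro i k
    induction k with
    | zero => rw [pow_zero]; exact contrE_one n m g
    | succ k ih => rw [pow_succ, contrE_mul, ih, hx]; simp
  induction l with
  | nil => simpa using contrE_one n m g
  | cons a l ih => rw [List.map_cons, List.prod_cons, contrE_mul, ih, hp]; simp

open scoped ComplexOrder in
lemma gram_det_ne_zero {z : Fin n → ℂ}
    (h : Function.Surjective (Matrix.mulVecLin (Matrix.of fun j i => f j i z))) :
    (gram n m r f z).det ≠ 0 := by
  set A : Matrix (Fin r) (Fin m) ℂ := Matrix.of fun j i => f j i z with hA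
  have hg : gram n m r f z = A * A.conjTranspose := by
    ext k l
    simp [gram, Matrix.mul_apply, hA]
  have hrank : (A * A.conjTranspose).rank = r := by
    rw [Matrix.rank_self_mul_conjTranspose, Matrix.rank, LinearMap.range_eq_top.2 h]
    simp
  rw [hg]
  have : IsUnit (A * A.conjTranspose) := by
    rw [← Matrix.mulVec_surjective_iff_isUnit]
    have : LinearMap.range (Matrix.mulVecLin (A * A.conjTranspose)) = ⊤ := by
      apply Submodule.eq_top_of_finrank_eq
      rw [← Matrix.rank, hrank]; simp
    exact LinearMap.range_eq_top.1 this
  exact ((Matrix.isUnit_iff_isUnit_det _).1 this).ne_zero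

lemma contr_sigma_mul {z : Fin n → ℂ} (hdet : (gram n m r f z).det ≠ 0) (j i : Fin r)
    (x : EA m n) :
    contrE m n (fun i => f j i z) (sigmaEl n m r f i z * x)
      = (if j = i then 1 else 0) * x
        - sigmaEl n m r f i z * contrE m n (fun i => f j i z) x := by
  rw [contrE_mul, contr_sigma hdet, invo_sigma, neg_mul, sub_eq_add_neg]

end local_part

/-- **Proposition (the basic identities for `u_k`).**  Let `f` be a holomorphic, generically
surjective `r × m` matrix on an open `U ⊆ ℂⁿ`, `Z ⊆ U` its degeneracy set, and
`σ = f*(ff*)⁻¹` the minimal right inverse.  Then on `U ∖ Z`: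
`δ_F u₁ = 1`, and `δ_f u_{k+1} = ∂̄ u_k` for all `k ≥ 1`. -/
theorem deltaF_uOne_eq_one_and_delta_u_succ_eq_dbar_u
    (hr : 1 ≤ r) (hrm : r ≤ m)
    (U : Set (Fin n → ℂ)) (hU : IsOpen U)
    (hf : ∀ j i, AnalyticOnNhd ℂ (f j i) U)
    (Z : Set (Fin n → ℂ))
    (hZ : Z = {z ∈ U |
      ¬ Function.Surjective (Matrix.mulVecLin (Matrix.of fun j i => f j i z))})
    (hgen : ¬ U ⊆ Z) :
    (∀ z ∈ U \ Z, deltaTop n m r f z (uForm n m r f 1 z) = 1) ∧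
    (∀ k : ℕ, 1 ≤ k →
      ∀ v : (Fin n → ℂ) → (Fin r → ℕ) → EA m n,
        IsDbarFamOn n m r (U \ Z) (fun z => uForm n m r f k z) v →
        ∀ z ∈ U \ Z, ∀ α : Fin r → ℕ,
          deltaLow n m r f z (uForm n m r f (k + 1) z) α = v z α) := by
  have hdet : ∀ z ∈ U \ Z, (gram n m r f z).det ≠ 0 := by
    intro z hz
    apply gram_det_ne_zero
    by_contra hcon
    exact hz.2 (by rw [hZ]; exact ⟨hz.1, hcon⟩)
  constructor
  · intro z hz
    have hd := hdet z hz
    unfold deltaTop uForm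
    simp only [Pi.zero_apply, Finset.sum_const_zero, zero_add, if_true, pow_zero]
    have h1 : (List.ofFn fun _ : Fin r => (1 : EA m n)).prod = 1 := by simp
    rw [h1, mul_one, List.ofFn_eq_map, List.ofFn_eq_map]
    exact foldl_contr (fun j => contrE m n (fun i => f j i z)) _
      (fun j => contrE_one n m _) (contr_sigma_mul hd) _ (List.nodup_finRange r)
  · intro k hk v hv z hz α
    have hd := hdet z hz
    have hfz : ∀ j i, AnalyticAt ℂ (f j i) z := fun j i => hf j i z hz.1
    obtain ⟨w, hw1, hw2⟩ := hv α
    rw [hw1 z hz]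
    -- any exterior derivative of the component agrees with the given one
    have uniq : ∀ D, HB z (fun y => uForm n m r f k y α) D →
        ∑ t, ExteriorAlgebra.ι ℂ (xiVec m n t) * w t z = D := by
      rintro D ⟨u', hu', rfl⟩
      refine Finset.sum_congr rfl fun t _ => ?_
      congr 1
      rw [← sub_eq_zero, ← Module.forall_dual_apply_eq_zero_iff ℂ]
      intro ℓ
      rw [map_sub, hw2 t ℓ z hz, ((hu' t).eval ℓ).2, sub_self]
    have hsum : ∀ j, ∑ i, (α + Pi.single j 1 : Fin r → ℕ) i = (∑ i, α i) + 1 := by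
      intro j
      simp [Finset.sum_add_distrib]
    symm
    apply uniq
    unfold deltaLow uForm
    simp only [hsum]
    by_cases hα : (∑ j, α j) + 1 = k
    · have hα' : (∑ j, α j) + 1 + 1 = k + 1 := by omega
      simp only [hα, if_true]
      simp only [prod_pow_add_single _ (fun j => dbarSigma_central n m r f j z)]
      simp only [List.ofFn_eq_map]
      have hP := HB.prod_sigma (z := z) (sigmaEl n m r f) (fun j => dbarSigmaEl n m r f j z)
        (fun j => contrE m n (fun i => f j i z)) (HB_sigma hfz hd)
        (fun j => invo_sigma n m r f j z) (fun j => dbarSigma_central n m r f j z)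
        (fun j => contrE_one n m _) (contr_sigma_mul hd) (List.finRange r)
      have hB := HB.list (fun j => (HB_dbarSigma hfz hd j).pow (α j)) (List.finRange r)
      convert hP.mul hB using 1
      rw [mul_zero, add_zero, Finset.sum_mul]
      refine Finset.sum_congr rfl fun j _ => ?_
      rw [contrE_mul, contrE_mul, contr_dbarSigma hfz hd,
        contr_list_zero (z := z) _ _ (contr_dbarSigma hfz hd j)]
      rw [zero_mul, mul_zero, add_zero, mul_zero, add_zero, ← mul_assoc, dbarSigma_central]
    · have hα' : ¬ (∑ j, α j) + 1 + 1 = k + 1 := by omega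
      simp only [hα, hα', if_false, map_zero, Finset.sum_const_zero]
      exact ⟨fun _ => 0, fun _ => HD.zero, by simp⟩

end
end
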